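/- arXiv:0809.1614 — 5 statements merged into one kernel-verified Lean document; each statement's English description precedes it below -/
import Mathlib

section
/- (Formal interpolation.) Let f(z,z̄) = z + Σ_{k+l≥2, k,l≥0} c_{kl} zᵏz̄ˡ be a formal power series such that the pair (f,f̄) obtained via the real symmetry is area-preserving (formal Jacobian determinant 1). Then there exists a unique real-valued formal power series h(z,z̄) = Σ_{k+l≥3, k,l≥0} h_{kl} zᵏz̄ˡ (no terms of total degree <3) such that f = exp(L_h)z. -/
/-!
With the real symmetry, area preservation reads `{f, f̄} = 1`. The Hamiltonian is found degree by
degree. If two Hamiltonians agree below degree `N + 1`, their time-one maps agree below degree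
`N`, and in degree `N` they differ by `-2i ∂/∂z̄` of the difference of the Hamiltonians
(`FS2.ord_expLie_sub`). Since a real series is determined by its `z̄`-derivative up to a constant,
this gives uniqueness, also modulo terms of high degree (`FS2.ord_sub_of_expLie`).

For existence, let `F = exp(L_h) z` agree with `f` below degree `N`, and let `g` be the degree-`N`
part of `f - F`. The equation `-2i ∂χ/∂z̄ = g` has a real solution exactly when
`∂g/∂z + ∂ḡ/∂z̄ = 0`, which is the degree-`(N - 1)` part of `{f, f̄} - {F, F̄} = 0`
(`FS2.ord_div`, `FS2.isReal_correction`). Here `{F, F̄} = 1` because `exp(L_h)` commutes with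
conjugation for real `h` and, by the Jacobi identity, preserves the Poisson bracket
(`FS2.pb_expLie`). Replacing `h` by `h + χ` improves the agreement by one degree, and the
approximate solutions converge coefficientwise by uniqueness.
-/

open Complex Finset Asymptotics

noncomputable section

/-- Formal power series in two commuting variables `z`, `z̄`,
represented by coefficient functions: `h k l` is the coefficient of `z^k z̄^l`. -/
abbrev FS2 : Type := ℕ → ℕ → ℂ

namespace FS2

/-- The constant series `1`. -/
def one : FS2 := fun k l => if k = 0 ∧ l = 0 then 1 else 0

/-- The monomial `z^a z̄^b`. -/
def mono (a b : ℕ) : FS2 := fun k l => if k = a ∧ l = b then 1 else 0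

/-- Product of formal power series. -/
def mul (f g : FS2) : FS2 := fun k l =>
  ∑ p ∈ Finset.range (k + 1), ∑ q ∈ Finset.range (l + 1),
    f p q * g (k - p) (l - q)

/-- Powers of a formal power series. -/
def npow (f : FS2) : ℕ → FS2
  | 0 => one
  | n + 1 => mul f (npow f n)

/-- `∂/∂z`. -/
def dz (f : FS2) : FS2 := fun k l => ((k : ℂ) + 1) * f (k + 1) l

/-- `∂/∂z̄`. -/
def dw (f : FS2) : FS2 := fun k l => ((l : ℂ) + 1) * f k (l + 1)

/-- Poisson bracket `{f,g} = (∂f/∂z)(∂g/∂z̄) − (∂f/∂z̄)(∂g/∂z)`. -/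
def pb (f g : FS2) : FS2 := mul (dz f) (dw g) - mul (dw f) (dz g)

/-- Lie derivative `L_χ g = −2i {g, χ}`. -/
def lie (χ g : FS2) : FS2 := (-2 * Complex.I) • pb g χ

/-- Iterated Lie derivative `L_χ^n g`. -/
def lieIter (χ : FS2) : ℕ → FS2 → FS2
  | 0, g => g
  | n + 1, g => lie χ (lieIter χ n g)

/-- `exp(L_χ) g = Σ_{j≥0} (1/j!) L_χ^j g`.  When `χ` has no terms of total degree
`< 3`, the coefficient of `z^k z̄^l` in `L_χ^j g` vanishes for `j > k + l`, so the
truncated sum below computes the formal exponential exactly. -/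
def expLie (χ g : FS2) : FS2 := fun k l =>
  ∑ j ∈ Finset.range (k + l + 1), ((j.factorial : ℂ))⁻¹ * lieIter χ j g k l

/-- A series is real-valued: `h_{kl} = conj h_{lk}`. -/
def IsReal (h : FS2) : Prop := ∀ k l, h k l = (starRingEnd ℂ) (h l k)

/-- A pair of series has the real symmetry: `f̄_{kl} = conj f_{lk}`. -/
def RealPair (f fb : FS2) : Prop := ∀ k l, fb k l = (starRingEnd ℂ) (f l k)

/-- A pair is area-preserving: the formal Jacobian determinant equals `1`. -/
def UnitJacobian (f fb : FS2) : Prop :=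
  mul (dz f) (dw fb) - mul (dw f) (dz fb) = one

/-- No terms of total degree `< 3`. -/
def Ord3 (h : FS2) : Prop := ∀ k l, k + l < 3 → h k l = 0

/-- The rotated series `h(e^{iθ} z, e^{-iθ} z̄)`. -/
def rot (θ : ℝ) (h : FS2) : FS2 := fun k l =>
  Complex.exp (Complex.I * θ * ((k : ℂ) - (l : ℂ))) * h k l

/-- Substitution of the pair `(φ, φb)` into `g`, i.e. `g(φ(z,z̄), φb(z,z̄))`.
When `φ, φb` have zero constant term, the coefficient of `z^k z̄^l` in
`φ^a φb^b` vanishes for `a + b > k + l`, so the truncated sum below computes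
the substitution exactly. -/
def subst (φ φb : FS2) (g : FS2) : FS2 := fun k l =>
  ∑ a ∈ Finset.range (k + l + 1), ∑ b ∈ Finset.range (k + l + 1),
    g a b * mul (npow φ a) (npow φb b) k l

end FS2

/-- The series `(zz̄)² A(zz̄) + (zⁿ + z̄ⁿ) B(z²z̄²)`. -/
def targetN (n : ℕ) (A B : ℕ → ℝ) : FS2 := fun k l =>
  if k = l ∧ 2 ≤ k then (A (k - 2) : ℂ)
  else if k = l + n ∧ Even l then (B (l / 2) : ℂ)
  else if l = k + n ∧ Even k then (B (k / 2) : ℂ)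
  else 0

/-- The series `(zz̄)³ A(zz̄) + (z³ + z̄³) B(zz̄)`. -/
def target3 (A B : ℕ → ℝ) : FS2 := fun k l =>
  if k = l ∧ 3 ≤ k then (A (k - 3) : ℂ)
  else if k = l + 3 then (B l : ℂ)
  else if l = k + 3 then (B k : ℂ)
  else 0


namespace FS2

/-! ### Algebra of the Poisson bracket -/

/-- A series viewed as an element of `ℂ⟦z̄⟧⟦z⟧`, which carries the commutative ring structure
whose product is `mul`. -/
def toPS (f : FS2) : PowerSeries (PowerSeries ℂ) :=
  PowerSeries.mk fun k => PowerSeries.mk fun l => f k l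

lemma toPS_injective : Function.Injective toPS := by
  intro f g h
  funext k l
  have := congrArg (fun s => PowerSeries.coeff l (PowerSeries.coeff k s)) h
  simpa [toPS] using this

lemma toPS_add (f g : FS2) : toPS (f + g) = toPS f + toPS g := by
  ext k l; simp [toPS]

lemma toPS_sub (f g : FS2) : toPS (f - g) = toPS f - toPS g := by
  ext k l; simp [toPS]

lemma toPS_mul (f g : FS2) : toPS (mul f g) = toPS f * toPS g := by
  ext k l
  simp only [toPS, mul, PowerSeries.coeff_mk, PowerSeries.coeff_mul, map_sum,
    Finset.Nat.sum_antidiagonal_eq_sum_range_succ_mk]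

lemma mul_add' (a b c : FS2) : mul a (b + c) = mul a b + mul a c :=
  toPS_injective (by simp only [toPS_mul, toPS_add]; ring)

lemma add_mul' (a b c : FS2) : mul (a + b) c = mul a c + mul b c :=
  toPS_injective (by simp only [toPS_mul, toPS_add]; ring)

lemma mul_smul' (t : ℂ) (a b : FS2) : mul a (t • b) = t • mul a b := by
  funext k l
  simp only [mul, Pi.smul_apply, smul_eq_mul, Finset.mul_sum]
  exact Finset.sum_congr rfl fun p _ => Finset.sum_congr rfl fun q _ => by ring

lemma smul_mul' (t : ℂ) (a b : FS2) : mul (t • a) b = t • mul a b := by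
  funext k l
  simp only [mul, Pi.smul_apply, smul_eq_mul, Finset.mul_sum]
  exact Finset.sum_congr rfl fun p _ => Finset.sum_congr rfl fun q _ => by ring

lemma dz_add (f g : FS2) : dz (f + g) = dz f + dz g := by
  funext k l; simp [dz, mul_add]

lemma dw_add (f g : FS2) : dw (f + g) = dw f + dw g := by
  funext k l; simp [dw, mul_add]

lemma dz_sub (f g : FS2) : dz (f - g) = dz f - dz g := by
  funext k l; simp [dz, mul_sub]

lemma dw_sub (f g : FS2) : dw (f - g) = dw f - dw g := by
  funext k l; simp [dw, mul_sub]

lemma dz_smul (t : ℂ) (f : FS2) : dz (t • f) = t • dz f := by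
  funext k l; simp [dz]; ring

lemma dw_smul (t : ℂ) (f : FS2) : dw (t • f) = t • dw f := by
  funext k l; simp [dw]; ring

lemma dz_dw (f : FS2) : dz (dw f) = dw (dz f) := by
  funext k l; simp [dz, dw]; ring

lemma toPS_dz (f : FS2) : toPS (dz f) = PowerSeries.derivative _ (toPS f) := by
  ext k l
  rw [PowerSeries.coeff_derivative]
  have : ((k : PowerSeries ℂ) + 1) = PowerSeries.C ((k : ℂ) + 1) := by simp
  rw [this, PowerSeries.coeff_mul_C]
  simp [toPS, dz, mul_comm]

lemma coeff_toPS_dw (f : FS2) (k : ℕ) : PowerSeries.coeff k (toPS (dw f)) =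
    PowerSeries.derivative ℂ (PowerSeries.coeff k (toPS f)) := by
  ext l
  rw [PowerSeries.coeff_derivative]
  simp [toPS, dw, mul_comm]

lemma dz_mul (f g : FS2) : dz (mul f g) = mul (dz f) g + mul f (dz g) := by
  apply toPS_injective
  simp only [toPS_dz, toPS_mul, toPS_add, Derivation.leibniz, smul_eq_mul]
  ring

lemma dw_mul (f g : FS2) : dw (mul f g) = mul (dw f) g + mul f (dw g) := by
  apply toPS_injective
  refine PowerSeries.ext fun k => ?_
  simp only [coeff_toPS_dw, toPS_mul, toPS_add, map_add, PowerSeries.coeff_mul, map_sum,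
    Derivation.leibniz, smul_eq_mul, ← Finset.sum_add_distrib]
  exact Finset.sum_congr rfl fun p _ => by ring

/-- The Poisson bracket as a bilinear map. -/
def pbL : FS2 →ₗ[ℂ] FS2 →ₗ[ℂ] FS2 :=
  LinearMap.mk₂ ℂ pb
    (fun a b c => by
      simp only [pb, dz_add, dw_add, add_mul']; abel)
    (fun t a b => by
      simp only [pb, dz_smul, dw_smul, smul_mul', smul_sub])
    (fun a b c => by
      simp only [pb, dz_add, dw_add, mul_add']; abel)
    (fun t a b => by
      simp only [pb, dz_smul, dw_smul, mul_smul', smul_sub])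

lemma pb_eq (a b : FS2) : pb a b = pbL a b := rfl

/-- The Jacobi identity, in the form saying that `{·, h}` is a derivation of the bracket. -/
lemma pb_pb (a b h : FS2) : pb (pb a b) h = pb (pb a h) b + pb a (pb b h) := by
  apply toPS_injective
  simp only [pb, toPS_add, toPS_sub, toPS_mul, dz_sub, dw_sub, dz_mul, dw_mul, dz_dw]
  ring

/-- The Lie derivative `L_χ` as a linear map. -/
def lieL (χ : FS2) : FS2 →ₗ[ℂ] FS2 := (-2 * Complex.I) • pbL.flip χ

lemma lie_eq (χ g : FS2) : lie χ g = lieL χ g := rfl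

lemma lieL_pbL (χ a b : FS2) : lieL χ (pbL a b) = pbL (lieL χ a) b + pbL a (lieL χ b) := by
  have := pb_pb a b χ
  simp only [pb_eq] at this
  simp [lieL, this, smul_add]

lemma lieIter_pb (χ a b : FS2) (n : ℕ) : lieIter χ n (pb a b) =
    ∑ ij ∈ Finset.HasAntidiagonal.antidiagonal n,
      n.choose ij.1 • pb (lieIter χ ij.1 a) (lieIter χ ij.2 b) := by
  induction n with
  | zero => simp [lieIter]
  | succ n ih =>
    rw [Finset.sum_antidiagonal_choose_succ_nsmul
      (fun i j => pb (lieIter χ i a) (lieIter χ j b)) n]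
    simp only [pb_eq] at ih
    simp only [lieIter, ih, lie_eq, pb_eq, map_sum, map_nsmul, lieL_pbL, smul_add,
      Finset.sum_add_distrib]
    rw [add_comm]
    congr 1
    refine Finset.sum_congr rfl fun ⟨i, j⟩ hij => ?_
    rw [n.choose_symm_of_eq_add (Finset.HasAntidiagonal.mem_antidiagonal.1 hij).symm]

/-! ### Order of vanishing -/

/-- `Ord n f`: the series `f` has no terms of total degree `< n`. -/
def Ord (n : ℕ) (f : FS2) : Prop := ∀ k l, k + l < n → f k l = 0

lemma Ord.anti {m n : ℕ} {f : FS2} (h : Ord n f) (hmn : m ≤ n) : Ord m f :=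
  fun k l hkl => h k l (by omega)

lemma Ord.add {n : ℕ} {f g : FS2} (hf : Ord n f) (hg : Ord n g) : Ord n (f + g) :=
  fun k l hkl => by simp [hf k l hkl, hg k l hkl]

lemma Ord.sub {n : ℕ} {f g : FS2} (hf : Ord n f) (hg : Ord n g) : Ord n (f - g) :=
  fun k l hkl => by simp [hf k l hkl, hg k l hkl]

lemma Ord.smul {n : ℕ} {f : FS2} (hf : Ord n f) (t : ℂ) : Ord n (t • f) :=
  fun k l hkl => by simp [hf k l hkl]

lemma Ord.sum {n : ℕ} {s : Finset ℕ} {f : ℕ → FS2} (hf : ∀ i ∈ s, Ord n (f i)) :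
    Ord n (∑ i ∈ s, f i) :=
  fun k l hkl => by
    simp only [Finset.sum_apply]
    exact Finset.sum_eq_zero fun i hi => hf i hi k l hkl

lemma Ord.mul {m n : ℕ} {f g : FS2} (hf : Ord m f) (hg : Ord n g) : Ord (m + n) (mul f g) := by
  intro k l hkl
  refine Finset.sum_eq_zero fun p hp => Finset.sum_eq_zero fun q hq => ?_
  rw [Finset.mem_range] at hp hq
  by_cases h : p + q < m
  · rw [hf p q h, zero_mul]
  · rw [hg (k - p) (l - q) (by omega), mul_zero]

lemma Ord.dz {n : ℕ} {f : FS2} (hf : Ord n f) : Ord (n - 1) (dz f) :=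
  fun k l hkl => by rw [FS2.dz, hf _ _ (by omega), mul_zero]

lemma Ord.dw {n : ℕ} {f : FS2} (hf : Ord n f) : Ord (n - 1) (dw f) :=
  fun k l hkl => by rw [FS2.dw, hf _ _ (by omega), mul_zero]

/-- The bracket of series of orders `m` and `n` has order at least `m + n - 2`. -/
lemma Ord.pb {m n d : ℕ} {f g : FS2} (hf : Ord m f) (hg : Ord n g) (hd : d + 2 ≤ m + n) :
    Ord d (pb f g) :=
  ((hf.dz.mul hg.dw).sub (hf.dw.mul hg.dz)).anti (by omega)

lemma Ord.lie {m n d : ℕ} {χ g : FS2} (hχ : Ord m χ) (hg : Ord n g) (hd : d + 2 ≤ m + n) :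
    Ord d (lie χ g) :=
  (hg.pb hχ (by omega)).smul _

lemma Ord.lieIter {n : ℕ} {χ g : FS2} (hχ : Ord 3 χ) (hg : Ord n g) (j : ℕ) :
    Ord (n + j) (lieIter χ j g) := by
  induction j with
  | zero => exact hg
  | succ j ih => exact hχ.lie ih (by omega)

lemma eq_of_ord {f g : FS2} (h : ∀ n, Ord n (f - g)) : f = g := by
  funext k l
  exact sub_eq_zero.1 (h (k + l + 1) k l (by omega))

lemma ord_mono (a b : ℕ) : Ord (a + b) (mono a b) := by
  intro k l hkl
  rw [mono, if_neg (by omega)]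

/-! ### The formal exponential preserves the bracket -/

lemma expLie_apply {χ g : FS2} (hχ : Ord 3 χ) {k l M : ℕ} (hM : k + l < M) :
    expLie χ g k l =
      ∑ j ∈ Finset.range M, ((j.factorial : ℂ))⁻¹ * lieIter χ j g k l := by
  refine Finset.sum_subset (Finset.range_mono (by omega)) fun j _ hj => ?_
  rw [Finset.mem_range, not_lt] at hj
  have h0 : Ord 0 g := fun _ _ h => absurd h (by omega)
  rw [hχ.lieIter h0 j k l (by omega), mul_zero]

/-- The partial sum of the first `M` terms of `exp(L_χ) g`. -/
def expTrunc (χ g : FS2) (M : ℕ) : FS2 :=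
  ∑ j ∈ Finset.range M, ((j.factorial : ℂ))⁻¹ • lieIter χ j g

lemma ord_expLie_sub_expTrunc {χ g : FS2} (hχ : Ord 3 χ) (M : ℕ) :
    Ord M (expLie χ g - expTrunc χ g M) := by
  intro k l hkl
  simp [expLie_apply hχ hkl, expTrunc]

lemma Ord.expTrunc {n : ℕ} {χ g : FS2} (hχ : Ord 3 χ) (hg : Ord n g) (M : ℕ) :
    Ord n (expTrunc χ g M) :=
  Ord.sum fun j _ => ((hχ.lieIter hg j).anti (by omega)).smul _

lemma Ord.expLie {n : ℕ} {χ g : FS2} (hχ : Ord 3 χ) (hg : Ord n g) : Ord n (expLie χ g) := by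
  intro k l hkl
  rw [expLie_apply hχ (Nat.lt_succ_self _)]
  exact Finset.sum_eq_zero fun j _ => by rw [hχ.lieIter hg j k l (by omega), mul_zero]

lemma pb_lieIter_factorial (χ a b : FS2) (n : ℕ) :
    ∑ i ∈ Finset.range (n + 1), (((i.factorial : ℂ))⁻¹ * (((n - i).factorial : ℂ))⁻¹) •
        pb (lieIter χ i a) (lieIter χ (n - i) b) =
      ((n.factorial : ℂ))⁻¹ • lieIter χ n (pb a b) := by
  rw [lieIter_pb, Finset.Nat.sum_antidiagonal_eq_sum_range_succ_mk, Finset.smul_sum]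
  refine Finset.sum_congr rfl fun i hi => ?_
  rw [← Nat.cast_smul_eq_nsmul ℂ, smul_smul]
  congr 1
  have hi' : i ≤ n := by simpa [Nat.lt_succ_iff] using hi
  have h := congrArg (Nat.cast : ℕ → ℂ) (Nat.choose_mul_factorial_mul_factorial hi')
  push_cast at h
  have h1 : (i.factorial : ℂ) ≠ 0 := by exact_mod_cast i.factorial_ne_zero
  have h2 : ((n - i).factorial : ℂ) ≠ 0 := by exact_mod_cast (n - i).factorial_ne_zero
  have h3 : (n.factorial : ℂ) ≠ 0 := by exact_mod_cast n.factorial_ne_zero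
  field_simp
  linear_combination -h

/-- `exp(L_χ)` is an automorphism of the bracket: both sides are compared through partial sums,
where the terms with `i + j ≥ M` in `{Σ L^i a / i!, Σ L^j b / j!}` have high order and the rest
is resummed along `i + j = n` by the Leibniz rule. -/
lemma pb_expLie {χ a b : FS2} (hχ : Ord 3 χ) (ha : Ord 1 a) (hb : Ord 1 b) :
    pb (expLie χ a) (expLie χ b) = expLie χ (pb a b) := by
  refine eq_of_ord fun N => ?_
  have hA := ord_expLie_sub_expTrunc (g := a) hχ (N + 1)
  have hB := ord_expLie_sub_expTrunc (g := b) hχ (N + 1)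
  have hC := ord_expLie_sub_expTrunc (g := pb a b) hχ (N + 1)
  have hT : Ord N (pb (expTrunc χ a (N + 1)) (expTrunc χ b (N + 1)) -
      expTrunc χ (pb a b) (N + 1)) := by
    have hflip : expTrunc χ (pb a b) (N + 1) =
        ∑ m ∈ Finset.range (N + 1), ∑ k ∈ Finset.range (N + 1 - m),
          (((m.factorial : ℂ))⁻¹ * ((k.factorial : ℂ))⁻¹) •
            pb (lieIter χ m a) (lieIter χ k b) := by
      rw [← Finset.sum_range_diag_flip (N + 1) (fun m k =>
        (((m.factorial : ℂ))⁻¹ * ((k.factorial : ℂ))⁻¹) • pb (lieIter χ m a) (lieIter χ k b))]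
      exact Finset.sum_congr rfl fun n _ => (pb_lieIter_factorial χ a b n).symm
    have hprod : pb (expTrunc χ a (N + 1)) (expTrunc χ b (N + 1)) =
        ∑ m ∈ Finset.range (N + 1), ∑ k ∈ Finset.range (N + 1),
          (((m.factorial : ℂ))⁻¹ * ((k.factorial : ℂ))⁻¹) •
            pb (lieIter χ m a) (lieIter χ k b) := by
      simp only [expTrunc, pb_eq, map_sum, map_smul, LinearMap.sum_apply, LinearMap.smul_apply,
        Finset.smul_sum, smul_smul]
      rw [Finset.sum_comm]
      simp only [mul_comm]
    rw [hflip, hprod, ← Finset.sum_sub_distrib]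
    refine Ord.sum fun m hm => ?_
    rw [← Finset.sum_range_add_sum_Ico _ (Nat.sub_le (N + 1) m), add_sub_cancel_left]
    refine Ord.sum fun k hk => Ord.smul ?_ _
    rw [Finset.mem_Ico] at hk
    exact (hχ.lieIter ha m).pb (hχ.lieIter hb k) (by omega)
  have h1 := hA.pb (hχ.expLie hb) (show N + 2 ≤ N + 1 + 1 by omega)
  have h2 := (Ord.expTrunc hχ ha (N + 1)).pb hB (show N + 2 ≤ 1 + (N + 1) by omega)
  have h3 := ((h1.add h2).add hT).sub (hC.anti (Nat.le_succ N))
  convert h3 using 1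
  simp only [pb_eq, map_sub, LinearMap.sub_apply]
  abel

/-! ### Complex conjugation -/

/-- The conjugate series `f̄`, with `f̄_{kl} = conj f_{lk}`. -/
def cj (f : FS2) : FS2 := fun k l => (starRingEnd ℂ) (f l k)

lemma Ord.cj {n : ℕ} {f : FS2} (hf : Ord n f) : Ord n (cj f) :=
  fun k l hkl => by rw [FS2.cj, hf l k (by omega), map_zero]

lemma cj_sub (f g : FS2) : cj (f - g) = cj f - cj g := by
  funext k l; simp [cj]

lemma cj_smul (t : ℂ) (f : FS2) : cj (t • f) = (starRingEnd ℂ t) • cj f := by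
  funext k l; simp [cj]

lemma cj_mul (f g : FS2) : cj (mul f g) = mul (cj f) (cj g) := by
  funext k l
  simp only [cj, mul, map_sum, map_mul]
  exact Finset.sum_comm

lemma cj_dz (f : FS2) : cj (dz f) = dw (cj f) := by
  funext k l; simp [cj, dz, dw]

lemma cj_dw (f : FS2) : cj (dw f) = dz (cj f) := by
  funext k l; simp [cj, dz, dw]

lemma cj_pb (f g : FS2) : cj (pb f g) = -pb (cj f) (cj g) := by
  simp [pb, cj_sub, cj_mul, cj_dz, cj_dw]

/-- `L_h` commutes with conjugation when `h` is real: conjugation changes the sign both of the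
bracket and of the factor `-2i`. -/
lemma cj_lieIter {h : FS2} (hh : cj h = h) (g : FS2) (j : ℕ) :
    cj (lieIter h j g) = lieIter h j (cj g) := by
  induction j with
  | zero => rfl
  | succ j ih =>
    simp only [lieIter, lie]
    rw [cj_smul, cj_pb, ih, hh]
    simp [map_ofNat (starRingEnd ℂ) 2]

lemma cj_expLie {h : FS2} (hh : cj h = h) (g : FS2) :
    cj (expLie h g) = expLie h (cj g) := by
  funext k l
  have hj : ∀ j, (starRingEnd ℂ) (lieIter h j g l k) = lieIter h j (cj g) k l := fun j =>
    congrFun (congrFun (cj_lieIter hh g j) k) l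
  simp [cj, expLie, hj, add_comm l k]

lemma IsReal.cj_eq {h : FS2} (hh : IsReal h) : cj h = h := by
  funext k l; exact (hh k l).symm

lemma cj_mono (a b : ℕ) : cj (mono a b) = mono b a := by
  funext k l
  simp only [cj, mono, and_comm]
  split_ifs <;> simp

lemma toPS_one : toPS one = 1 := by
  ext k l
  simp only [toPS, one, PowerSeries.coeff_mk, PowerSeries.coeff_one]
  split_ifs <;> simp_all [PowerSeries.coeff_one]

lemma one_mul' (f : FS2) : mul one f = f := toPS_injective (by rw [toPS_mul, toPS_one, one_mul])

lemma mul_one' (f : FS2) : mul f one = f := toPS_injective (by rw [toPS_mul, toPS_one, mul_one])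

lemma zero_mul' (f : FS2) : mul 0 f = 0 := by funext k l; simp [mul]

lemma mul_zero' (f : FS2) : mul f 0 = 0 := by funext k l; simp [mul]

lemma dz_z : dz (mono 1 0) = one := by
  funext k l
  by_cases hk : k = 0 <;> by_cases hl : l = 0 <;> simp [dz, mono, one, hk, hl]

lemma dw_z : dw (mono 1 0) = 0 := by
  funext k l; simp [dw, mono]

lemma dz_w : dz (mono 0 1) = 0 := by
  funext k l; simp [dz, mono]

lemma dw_w : dw (mono 0 1) = one := by
  funext k l
  by_cases hk : k = 0 <;> by_cases hl : l = 0 <;> simp [dw, mono, one, hk, hl]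

lemma pb_z_left (g : FS2) : pb (mono 1 0) g = dw g := by
  rw [pb, dz_z, dw_z, one_mul', zero_mul', sub_zero]

lemma pb_w_right (g : FS2) : pb g (mono 0 1) = dz g := by
  rw [pb, dz_w, dw_w, mul_one', mul_zero', sub_zero]

lemma expLie_one (χ : FS2) : expLie χ one = one := by
  have hlie : lie χ one = 0 := by
    have hz : dz one = 0 := by funext k l; simp [dz, one]
    have hw : dw one = 0 := by funext k l; simp [dw, one]
    rw [lie, pb, hz, hw, zero_mul', zero_mul', sub_zero, smul_zero]
  have hiter : ∀ j, lieIter χ (j + 1) one = 0 := by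
    intro j
    induction j with
    | zero => exact hlie
    | succ j ih =>
      rw [lieIter, ih, lie_eq, map_zero]
  funext k l
  rw [expLie, Finset.sum_range_succ', Finset.sum_eq_zero fun j _ => by rw [hiter]; simp]
  simp [lieIter]

/-- The time-one map of a real Hamiltonian is area-preserving. -/
lemma pb_expLie_cj {h : FS2} (hr : IsReal h) (h3 : Ord 3 h) :
    pb (expLie h (mono 1 0)) (cj (expLie h (mono 1 0))) = one := by
  rw [cj_expLie hr.cj_eq, cj_mono, pb_expLie h3 (ord_mono 1 0) (ord_mono 0 1), pb_z_left, dw_w,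
    expLie_one]

/-! ### Dependence of the time-one map on the Hamiltonian -/

/-- If two Hamiltonians agree below degree `N`, then below degree `N` their time-one maps differ
only through the term `L_h z = -2i ∂h/∂z̄` of the exponential, since every further bracket with a
series of order at least `3` raises the degree. -/
lemma ord_expLie_sub {h h' : FS2} (h3 : Ord 3 h) (h3' : Ord 3 h') {N : ℕ} (hN : Ord N (h - h')) :
    Ord N (expLie h (mono 1 0) - expLie h' (mono 1 0) -
      (-2 * Complex.I) • dw (h - h')) := by
  set z := mono 1 0
  have hz : Ord 1 z := ord_mono 1 0
  have h1 : lieIter h 1 z - lieIter h' 1 z = (-2 * Complex.I) • dw (h - h') := by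
    simp only [lieIter, lie, z, pb_z_left, dw_sub, smul_sub]
  have hj : ∀ j, Ord (N + j) (lieIter h (j + 2) z - lieIter h' (j + 2) z) := by
    -- one step: `L_h A - L_{h'} A' = L_h (A - A') + L_{h - h'} A'`
    have hstep : ∀ j, lieIter h (j + 1) z - lieIter h' (j + 1) z =
        lie h (lieIter h j z - lieIter h' j z) + lie (h - h') (lieIter h' j z) := by
      intro j
      simp only [lieIter, lie, pb_eq, map_sub, LinearMap.sub_apply, smul_sub]
      abel
    intro j
    induction j with
    | zero =>
      rw [hstep, h1]
      have hd : Ord (N - 1) ((-2 * Complex.I) • dw (h - h')) := hN.dw.smul _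
      exact (h3.lie hd (by omega)).add (hN.lie (h3'.lieIter hz 1) (by omega))
    | succ j ih =>
      rw [hstep]
      exact (h3.lie ih (by omega)).add (hN.lie (h3'.lieIter hz (j + 2)) (by omega))
  intro k l hkl
  have hc := congrFun (congrFun h1 k) l
  simp only [Pi.sub_apply] at hc ⊢
  rw [expLie_apply h3 (show k + l < k + l + 2 by omega),
    expLie_apply h3' (show k + l < k + l + 2 by omega), ← Finset.sum_sub_distrib,
    Finset.sum_range_succ', Finset.sum_range_succ', Finset.sum_eq_zero, ← hc]
  · simp [lieIter]
  · intro j _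
    have := hj j k l (by omega)
    simp only [Pi.sub_apply] at this
    rw [← mul_sub, this, mul_zero]

/-- A real Hamiltonian is determined below degree `n + 1` by its time-one map below degree `n`. -/
lemma ord_sub_of_expLie {h h' : FS2} (hr : IsReal h) (hr' : IsReal h') (h3 : Ord 3 h)
    (h3' : Ord 3 h') (n : ℕ) (hn : Ord n (expLie h (mono 1 0) - expLie h' (mono 1 0))) :
    Ord (n + 1) (h - h') := by
  induction n with
  | zero => exact (h3.sub h3').anti (by omega)
  | succ n ih =>
    have hd := ih (hn.anti (Nat.le_succ n))
    have hw : ∀ k l, k + l < n + 1 → h k (l + 1) = h' k (l + 1) := by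
      intro k l hkl
      have e1 := hn k l hkl
      have e2 := ord_expLie_sub h3 h3' hd k l hkl
      rw [Pi.sub_apply, Pi.sub_apply, e1] at e2
      have hl : (l : ℂ) + 1 ≠ 0 := Nat.cast_add_one_ne_zero l
      simpa [dw, hl, sub_eq_zero] using e2
    intro k l hkl
    simp only [Pi.sub_apply]
    rw [sub_eq_zero]
    rcases l with _ | l
    · rcases k with _ | k
      · rw [h3 0 0 (by omega), h3' 0 0 (by omega)]
      · rw [hr (k + 1) 0, hr' (k + 1) 0, hw 0 k (by omega)]
    · exact hw k l (by omega)

/-! ### Solving the equation degree by degree -/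

/-- Two area-preserving maps tangent to the identity that agree below degree `N` differ in degree
`N` by a divergence-free field. -/
lemma ord_div {f F : FS2} {N : ℕ} (hf : Ord 2 (f - mono 1 0)) (hF : Ord 2 (F - mono 1 0))
    (hfJ : pb f (cj f) = one) (hFJ : pb F (cj F) = one) (hg : Ord N (f - F)) :
    Ord N (dz (f - F) + dw (cj (f - F))) := by
  have hfb : Ord 2 (cj f - mono 0 1) := by
    have := hf.cj
    rwa [cj_sub, cj_mono] at this
  have h1 := hg.pb hfb (show N + 2 ≤ N + 2 from le_rfl)
  have h2 := hF.pb hg.cj (show N + 2 ≤ 2 + N by omega)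
  have key : dz (f - F) + dw (cj (f - F)) =
      (pb f (cj f) - pb F (cj F)) - pb (f - F) (cj f - mono 0 1)
        - pb (F - mono 1 0) (cj (f - F)) := by
    rw [← pb_w_right, ← pb_z_left, cj_sub]
    simp only [pb_eq, map_sub, LinearMap.sub_apply]
    abel
  rw [key, hfJ, hFJ, sub_self]
  have h0 : Ord N (0 : FS2) := fun _ _ _ => rfl
  exact (h0.sub h1).sub h2

/-- The homogeneous real solution `χ` of degree `N + 1` of `-2i ∂χ/∂z̄ = g`, where only the
degree-`N` part of `g` is used. The coefficient of the pure power of `z`, which the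
equation leaves free, is fixed by reality. -/
def correction (N : ℕ) (g : FS2) : FS2 := fun k l =>
  if k + l = N + 1 then
    if l = 0 then (starRingEnd ℂ) (Complex.I / 2 * g 0 (k - 1) / k)
    else Complex.I / 2 * g k (l - 1) / l
  else 0

lemma isReal_correction {N : ℕ} {g : FS2} (hg : Ord N (dz g + dw (cj g))) :
    IsReal (correction N g) := by
  intro k l
  unfold correction
  by_cases hkl : k + l = N + 1
  · rw [if_pos hkl, if_pos (show l + k = N + 1 by omega)]
    rcases l with _ | l
    · rw [if_pos rfl, if_neg (show k ≠ 0 by omega)]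
    rcases k with _ | k
    · rw [if_neg (Nat.succ_ne_zero l), if_pos rfl, Complex.conj_conj]
    have h := hg k l (by omega)
    simp only [Pi.add_apply, dz, dw, cj] at h
    have hk : (k : ℂ) + 1 ≠ 0 := Nat.cast_add_one_ne_zero k
    have hl : (l : ℂ) + 1 ≠ 0 := Nat.cast_add_one_ne_zero l
    simp only [Nat.succ_ne_zero, if_false, Nat.add_sub_cancel, map_div₀, map_mul,
      Complex.conj_I, Nat.cast_add, Nat.cast_one, map_add, map_one, map_natCast, map_ofNat]
    field_simp
    linear_combination h
  · rw [if_neg hkl, if_neg (show l + k ≠ N + 1 by omega), map_zero]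

/-- A real Hamiltonian generating `f` up to terms of degree `N`. -/
lemma exists_approx {f : FS2} (hf : Ord 2 (f - mono 1 0)) (hfJ : pb f (cj f) = one) (N : ℕ) :
    ∃ h : FS2, IsReal h ∧ Ord 3 h ∧ Ord N (f - expLie h (mono 1 0)) := by
  suffices H : ∃ h : FS2, IsReal h ∧ Ord 3 h ∧ Ord (N + 2) (f - expLie h (mono 1 0)) by
    obtain ⟨h, hr, h3, ho⟩ := H
    exact ⟨h, hr, h3, ho.anti (by omega)⟩
  have hzero : Ord 3 (0 : FS2) := fun _ _ _ => rfl
  have exp_zero : expLie 0 (mono 1 0) = mono 1 0 := by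
    funext k l
    rw [expLie, Finset.sum_range_succ', Finset.sum_eq_zero]
    · simp [lieIter]
    · intro j _
      have : lieIter 0 (j + 1) (mono 1 0) = 0 := by
        simp [lieIter, lie, pb_eq]
      rw [this]; simp
  induction N with
  | zero =>
    exact ⟨0, fun k l => by simp, hzero, by rw [exp_zero]; exact hf⟩
  | succ N ih =>
    obtain ⟨h, hr, h3, ho⟩ := ih
    have hF2 : Ord 2 (expLie h (mono 1 0) - mono 1 0) := by
      have := hf.sub (ho.anti (show 2 ≤ N + 2 by omega))
      convert this using 1
      abel
    have hdiv := ord_div hf hF2 hfJ (pb_expLie_cj hr h3) ho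
    set g := f - expLie h (mono 1 0) with hgdef
    set χ := correction (N + 2) g with hχ
    have hχr : IsReal χ := isReal_correction hdiv
    have hχo : Ord (N + 3) χ := fun k l hkl => by
      rw [hχ, correction, if_neg (by omega)]
    have h3' : Ord 3 (h + χ) := h3.add (hχo.anti (by omega))
    refine ⟨h + χ, fun k l => ?_, h3', ?_⟩
    · simp only [Pi.add_apply, map_add]
      rw [hr k l, hχr k l]
    · have hd := ord_expLie_sub (N := N + 3) h3' h3 (by rw [add_sub_cancel_left]; exact hχo)
      rw [add_sub_cancel_left] at hd
      have hg : Ord (N + 3) (g - (-2 * Complex.I) • dw χ) := by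
        intro k l hkl
        simp only [Pi.sub_apply, Pi.smul_apply, smul_eq_mul, dw]
        by_cases h' : k + l = N + 2
        · have hl : (l : ℂ) + 1 ≠ 0 := Nat.cast_add_one_ne_zero l
          rw [hχ, correction, if_pos (by omega), if_neg (Nat.succ_ne_zero l)]
          simp only [Nat.add_sub_cancel, Nat.cast_add, Nat.cast_one]
          field_simp
          linear_combination g k l * Complex.I_sq
        · rw [ho k l (by omega), hχo k (l + 1) (by omega)]
          simp
      convert hg.sub hd using 1
      rw [hgdef]
      abel

end FS2

/-- **Formal interpolation.**  A tangent-to-identity area-preserving pair of formal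
power series with the real symmetry is the formal time-one map of a unique real-valued
formal Hamiltonian with no terms of total degree `< 3`:  `f = exp(L_h) z`. -/
theorem formal_interpolation
    (f fb : FS2) (hsym : FS2.RealPair f fb)
    (hf00 : f 0 0 = 0) (hf10 : f 1 0 = 1) (hf01 : f 0 1 = 0)
    (harea : FS2.UnitJacobian f fb) :
    ∃! h : FS2, FS2.IsReal h ∧ FS2.Ord3 h ∧ f = FS2.expLie h (FS2.mono 1 0) := by
  have hfb : fb = FS2.cj f := by funext k l; exact hsym k l
  subst hfb
  have hfJ : FS2.pb f (FS2.cj f) = FS2.one := harea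
  have hf : FS2.Ord 2 (f - FS2.mono 1 0) := by
    intro k l hkl
    obtain ⟨rfl, rfl⟩ | ⟨rfl, rfl⟩ | ⟨rfl, rfl⟩ :
        (k = 0 ∧ l = 0) ∨ (k = 1 ∧ l = 0) ∨ (k = 0 ∧ l = 1) := by omega
    · simp [FS2.mono, hf00]
    · simp [FS2.mono, hf10]
    · simp [FS2.mono, hf01]
  choose H hr h3 ho using FS2.exists_approx hf hfJ
  -- `H n` and `H N` agree in degrees `≤ n` for `n ≤ N`, so a limit is read off the diagonal.
  have hlim : ∀ n N, n ≤ N → FS2.Ord (n + 1) (H n - H N) := by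
    intro n N hnN
    refine FS2.ord_sub_of_expLie (hr n) (hr N) (h3 n) (h3 N) n ?_
    convert ((ho N).anti hnN).sub (ho n) using 1
    abel
  set h : FS2 := fun k l => H (k + l) k l with hh
  have hhr : FS2.IsReal h := by
    intro k l
    simp only [hh]
    rw [add_comm l k]
    exact hr (k + l) k l
  have hh3 : FS2.Ord 3 h := fun k l hkl => h3 (k + l) k l hkl
  have hH : ∀ N, FS2.Ord (N + 1) (h - H N) := fun N k l hkl =>
    hlim (k + l) N (by omega) k l (by omega)
  have hfh : f = FS2.expLie h (FS2.mono 1 0) := by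
    refine FS2.eq_of_ord fun N => ?_
    have h1 := FS2.ord_expLie_sub hh3 (h3 N) ((hH N).anti (Nat.le_succ N))
    have h2 : FS2.Ord N ((-2 * Complex.I) • FS2.dw (h - H N)) := (hH N).dw.smul _
    convert ((ho N).sub h1).sub h2 using 1
    abel
  refine ⟨h, ⟨hhr, hh3, hfh⟩, ?_⟩
  rintro h' ⟨hr', h3', he'⟩
  refine FS2.eq_of_ord fun N => ?_
  refine (FS2.ord_sub_of_expLie hr' hhr h3' hh3 N ?_).anti (Nat.le_succ N)
  rw [← he', ← hfh, sub_self]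
  exact fun _ _ _ => rfl

end
end

section
/- Let F be a real-analytic area-preserving map of a neighbourhood of the origin in ℝ² with F(0)=0 and DF(0)=Id (tangent to identity). Write its Taylor series at 0 in complex coordinates z=x+iy, z̄=x−iy, and let h = Σ_{p≥3} h_p be the unique real-valued formal interpolating Hamiltonian (h_p homogeneous of degree p) given by the formal interpolation theorem: f = exp(L_h)z. For m≥3 let H_m = Σ_{p=3}^{m} h_p, a real-valued polynomial, and let Ĥ_m(x,y) = H_m(x+iy, x−iy), a real polynomial Hamiltonian. Then for every m≥3, F = Φ¹_{Ĥ_m} + O(rᵐ) as r=√(x²+y²)→0, where Φ¹_{Ĥ_m} is the time-one map of the Hamiltonian flow ẋ = ∂Ĥ_m/∂y, ẏ = −∂Ĥ_m/∂x (which is defined in a neighbourhood of the origin): that is, |F(x,y) − Φ¹_{Ĥ_m}(x,y)| ≤ C rᵐ for some C>0 and all (x,y) sufficiently close to 0. -/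
/-!
The Hamiltonian flow acts on polynomial observables `g(z, z̄)` by `d/dt g(γ) = (L_H g)(γ)`,
where `H` is the polynomial Hamiltonian `Ĥ_m` written in `z, z̄`. Taylor's formula on `[0,1]`
for the observable `g = z` therefore gives

  `Φ¹(p) = Σ_{j<m} (1/j!) (L_H^j z)(p) + R`,  `|R| ≤ sup_{t ∈ [0,1]} |(L_H^m z)(γ(t))|`.

As `H` has order at least three, `L_H` raises the order by one, so `L_H^m z` has order at least
`m + 1`. Moreover the vector field is `O(|z|²)`, so by Picard–Lindelöf on the disc of radius
`2|p|` the solution starting at a small `p` lives on a neighbourhood of `[0,1]` and stays in that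
disc; hence `R = O(|p|^m)` (`exists_flow`, `taylor_chain`, `flow_sub_lieSeries`).

On the formal side, the terms of degree `< m` of `L_h g` involve only the terms of `h` of degree
`≤ m`, so replacing `h` by its truncation does not alter the terms of degree `< m` of the Lie series
(`FS2.AgreeLT.lie`). The Lie series thus differs from the degree-`m` Taylor polynomial of `F` by a
polynomial of order at least `m` (`taylor_sub_lieSeries`), and that Taylor polynomial is within
`o(|p|^m)` of `F`.

Polynomials in `z, z̄` are elements of `ℂ[X][X]`; `BiPoly.cf` carries them to formal series and
intertwines products, derivatives and Lie derivatives.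
-/

open Complex Finset Asymptotics

noncomputable section

/-- `c` is the Taylor series at the origin of the map `F` of the plane, written in the
complex coordinates `z = x + iy`, `z̄ = x − iy`: for every `m`, the degree-`m` Taylor
polynomial `Σ_{k+l≤m} c_{kl} z^k z̄^l` approximates `F₁ + iF₂` to order `o(‖p‖^m)`. -/
def TaylorCoeffs (F : ℝ × ℝ → ℝ × ℝ) (c : FS2) : Prop :=
  ∀ m : ℕ,
    (fun p : ℝ × ℝ =>
        ((F p).1 : ℂ) + ((F p).2 : ℂ) * Complex.I -
          ∑ k ∈ Finset.range (m + 1), ∑ l ∈ Finset.range (m + 1),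
            (if k + l ≤ m then
              c k l * ((p.1 : ℂ) + (p.2 : ℂ) * Complex.I) ^ k *
                ((p.1 : ℂ) - (p.2 : ℂ) * Complex.I) ^ l
            else 0))
      =o[nhds (0 : ℝ × ℝ)] fun p => ‖p‖ ^ m

/-- The real polynomial Hamiltonian `Ĥ_m(x,y) = Σ_{3 ≤ k+l ≤ m} h_{kl} z^k z̄^l`
(real-valued since `h` is), where `z = x + iy`. -/
def polyHam (h : FS2) (m : ℕ) (p : ℝ × ℝ) : ℝ :=
  (∑ k ∈ Finset.range (m + 1), ∑ l ∈ Finset.range (m + 1),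
    (if 3 ≤ k + l ∧ k + l ≤ m then
      h k l * ((p.1 : ℂ) + (p.2 : ℂ) * Complex.I) ^ k *
        ((p.1 : ℂ) - (p.2 : ℂ) * Complex.I) ^ l
     else 0)).re

/-- The Hamiltonian vector field `(∂H/∂y, −∂H/∂x)`. -/
def hamVF (H : ℝ × ℝ → ℝ) (p : ℝ × ℝ) : ℝ × ℝ :=
  (fderiv ℝ H p (0, 1), -(fderiv ℝ H p (1, 0)))

/-! ### Coefficients of formal series -/

namespace FS2

/-- `f` has no terms of total degree `< n`. -/
def OrdGE (n : ℕ) (f : FS2) : Prop := ∀ k l, k + l < n → f k l = 0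

/-- `f` and `g` have the same terms of total degree `< n`. -/
def AgreeLT (n : ℕ) (f g : FS2) : Prop := ∀ k l, k + l < n → f k l = g k l

lemma mul_congr {f g f' g' : FS2} {k l : ℕ}
    (H : ∀ p q r s, p + r = k → q + s = l → f p q * g r s = f' p q * g' r s) :
    mul f g k l = mul f' g' k l := by
  unfold mul
  refine Finset.sum_congr rfl fun p hp => Finset.sum_congr rfl fun q hq => ?_
  rw [Finset.mem_range] at hp hq
  exact H _ _ _ _ (by omega) (by omega)

lemma OrdGE.mul {a b : ℕ} {f g : FS2} (hf : OrdGE a f) (hg : OrdGE b g) :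
    OrdGE (a + b) (FS2.mul f g) := by
  intro k l hkl
  unfold FS2.mul
  refine Finset.sum_eq_zero fun p hp => Finset.sum_eq_zero fun q hq => ?_
  rw [Finset.mem_range] at hp hq
  by_cases h : p + q < a
  · rw [hf p q h, zero_mul]
  · rw [hg (k - p) (l - q) (by omega), mul_zero]

lemma OrdGE.dz {n : ℕ} {f : FS2} (hf : OrdGE (n + 1) f) : OrdGE n (FS2.dz f) := by
  intro k l hkl
  simp [FS2.dz, hf (k + 1) l (by omega)]

lemma OrdGE.dw {n : ℕ} {f : FS2} (hf : OrdGE (n + 1) f) : OrdGE n (FS2.dw f) := by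
  intro k l hkl
  simp [FS2.dw, hf k (l + 1) (by omega)]

lemma OrdGE.lie {n : ℕ} {χ g : FS2} (hχ : Ord3 χ) (hg : OrdGE (n + 1) g) :
    OrdGE (n + 2) (FS2.lie χ g) := by
  have hχ' : OrdGE (2 + 1) χ := hχ
  intro k l hkl
  have h1 := hg.dz.mul hχ'.dw k l hkl
  have h2 := hg.dw.mul hχ'.dz k l hkl
  simp [FS2.lie, FS2.pb, h1, h2]

/-- Each Lie derivative along a series of order `≥ 3` raises the order by one. -/
lemma ordGE_lieIter {χ : FS2} (hχ : Ord3 χ) (j : ℕ) :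
    OrdGE (j + 1) (lieIter χ j (mono 1 0)) := by
  induction j with
  | zero =>
    intro k l hkl
    simp only [lieIter, mono]
    rw [if_neg (by omega)]
  | succ j ih => exact OrdGE.lie hχ ih

/-- The terms of degree `< m` of `L_χ g` depend only on the terms of degree `≤ m` of `χ`
and on the terms of degree `< m` of `g`. -/
lemma AgreeLT.lie {m : ℕ} {χ χ' g g' : FS2} (hχ : Ord3 χ) (hχ' : Ord3 χ')
    (hh : AgreeLT (m + 1) χ χ') (hg : AgreeLT m g g') :
    AgreeLT m (FS2.lie χ g) (FS2.lie χ' g') := by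
  intro k l hkl
  have h1 : FS2.mul (FS2.dz g) (FS2.dw χ) k l = FS2.mul (FS2.dz g') (FS2.dw χ') k l := by
    refine mul_congr fun p q r s hp hq => ?_
    by_cases h : p + q + 1 < m
    · simp only [FS2.dz, FS2.dw]
      rw [hg (p + 1) q (by omega), hh r (s + 1) (by omega)]
    · simp only [FS2.dw]
      rw [hχ r (s + 1) (by omega), hχ' r (s + 1) (by omega)]
      simp
  have h2 : FS2.mul (FS2.dw g) (FS2.dz χ) k l = FS2.mul (FS2.dw g') (FS2.dz χ') k l := by
    refine mul_congr fun p q r s hp hq => ?_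
    by_cases h : p + q + 1 < m
    · simp only [FS2.dz, FS2.dw]
      rw [hg p (q + 1) (by omega), hh (r + 1) s (by omega)]
    · simp only [FS2.dz]
      rw [hχ (r + 1) s (by omega), hχ' (r + 1) s (by omega)]
      simp
  simp [FS2.lie, FS2.pb, h1, h2]

lemma agreeLT_lieIter {m : ℕ} {χ χ' : FS2} (hχ : Ord3 χ) (hχ' : Ord3 χ')
    (hh : AgreeLT (m + 1) χ χ') (j : ℕ) (g : FS2) :
    AgreeLT m (lieIter χ j g) (lieIter χ' j g) := by
  induction j with
  | zero => intro k l _; rfl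
  | succ j ih => exact AgreeLT.lie hχ hχ' hh ih

/-- Below degree `m` the exponential series may be cut after `m` terms. -/
lemma expLie_eq_sum {χ : FS2} (hχ : Ord3 χ) {m k l : ℕ} (hkl : k + l < m) :
    expLie χ (mono 1 0) k l =
      ∑ j ∈ Finset.range m, ((j.factorial : ℂ))⁻¹ * lieIter χ j (mono 1 0) k l := by
  unfold expLie
  refine Finset.sum_subset (Finset.range_mono (by omega)) fun j _ hj => ?_
  rw [Finset.mem_range] at hj
  rw [ordGE_lieIter hχ j k l (by omega), mul_zero]

end FS2

/-! ### Polynomials in `z` and `z̄` -/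

namespace BiPoly

open Polynomial ComplexConjugate

/-- The coefficients of a polynomial in two variables; the outer variable of `ℂ[X][X]`
stands for `z` and the inner one for `z̄`. -/
def cf (P : ℂ[X][X]) : FS2 := fun k l => (P.coeff k).coeff l

/-- The value of a polynomial at `(z, z̄) = (a, b)`. -/
def ev (P : ℂ[X][X]) (a b : ℂ) : ℂ := P.evalEval b a

/-- The derivative `∂/∂z̄`, acting on coefficients (`∂/∂z` is `Polynomial.derivative`). -/
def dwP (P : ℂ[X][X]) : ℂ[X][X] := P.sum fun n a => monomial n (derivative a)

/-- The Lie derivative `L_χ g = −2i (g_z χ_z̄ − g_z̄ χ_z)` of polynomials. -/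
def lieP (χ g : ℂ[X][X]) : ℂ[X][X] :=
  C (C (-2 * Complex.I)) * (derivative g * dwP χ - dwP g * derivative χ)

/-- The polynomial formed by the terms of total degree `≤ m` of a series. -/
def trunc (m : ℕ) (f : FS2) : ℂ[X][X] :=
  ∑ k ∈ Finset.range (m + 1), ∑ l ∈ Finset.range (m + 1),
    monomial k (monomial l (if k + l ≤ m then f k l else 0))

lemma cf_mul (P Q : ℂ[X][X]) : cf (P * Q) = FS2.mul (cf P) (cf Q) := by
  funext k l
  simp only [cf, FS2.mul, coeff_mul, finsetSum_coeff,
    Finset.Nat.sum_antidiagonal_eq_sum_range_succ_mk]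

lemma cf_sub (P Q : ℂ[X][X]) : cf (P - Q) = cf P - cf Q := by
  funext k l
  simp [cf]

lemma cf_CC_mul (a : ℂ) (P : ℂ[X][X]) : cf (C (C a) * P) = a • cf P := by
  funext k l
  simp [cf]

lemma cf_sum {ι : Type*} (s : Finset ι) (P : ι → ℂ[X][X]) (k l : ℕ) :
    cf (∑ i ∈ s, P i) k l = ∑ i ∈ s, cf (P i) k l := by
  simp [cf]

lemma cf_derivative (P : ℂ[X][X]) : cf (derivative P) = FS2.dz (cf P) := by
  funext k l
  simp only [cf, FS2.dz, coeff_derivative]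
  rw [← Nat.cast_succ, coeff_mul_natCast]
  push_cast
  ring

lemma coeff_dwP (P : ℂ[X][X]) (k : ℕ) : (dwP P).coeff k = derivative (P.coeff k) := by
  rw [dwP, sum_def, finsetSum_coeff]
  simp only [coeff_monomial]
  rw [Finset.sum_ite_eq']
  split_ifs with h
  · rfl
  · rw [notMem_support_iff.1 h, derivative_zero]

lemma cf_dwP (P : ℂ[X][X]) : cf (dwP P) = FS2.dw (cf P) := by
  funext k l
  simp only [cf, FS2.dw, coeff_dwP, coeff_derivative]
  ring

lemma cf_lieP (χ g : ℂ[X][X]) : cf (lieP χ g) = FS2.lie (cf χ) (cf g) := by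
  rw [lieP, cf_CC_mul, cf_sub, cf_mul, cf_mul, cf_derivative, cf_derivative, cf_dwP, cf_dwP]
  rfl

lemma cf_trunc (m : ℕ) (f : FS2) (k l : ℕ) :
    cf (trunc m f) k l = if k + l ≤ m then f k l else 0 := by
  simp only [cf, trunc, finsetSum_coeff, coeff_monomial]
  rw [Finset.sum_eq_single k, Finset.sum_eq_single l]
  · simp
  · intro b _ hb
    simp [coeff_monomial, hb]
  · intro hl
    rw [Finset.mem_range] at hl
    rw [if_neg (by omega : ¬ k + l ≤ m)]
    simp
  · intro b _ hb
    refine Finset.sum_eq_zero fun c _ => ?_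
    simp [hb]
  · intro hk
    rw [Finset.mem_range] at hk
    refine Finset.sum_eq_zero fun c _ => ?_
    rw [if_neg (by omega : ¬ k + c ≤ m)]
    simp

lemma ev_trunc (m : ℕ) (f : FS2) (a b : ℂ) :
    ev (trunc m f) a b = ∑ k ∈ Finset.range (m + 1), ∑ l ∈ Finset.range (m + 1),
      (if k + l ≤ m then f k l * a ^ k * b ^ l else 0) := by
  simp only [ev, trunc, evalEval_finsetSum]
  refine Finset.sum_congr rfl fun k _ => Finset.sum_congr rfl fun l _ => ?_
  split_ifs
  · simp [evalEval, eval_monomial]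
    ring
  · simp

lemma ev_eq_sum (P : ℂ[X][X]) :
    ∃ N, ∀ M, N ≤ M → ∀ a b, ev P a b =
      ∑ k ∈ Finset.range M, ∑ l ∈ Finset.range M, cf P k l * a ^ k * b ^ l := by
  induction P using Polynomial.induction_on' with
  | add P Q hP hQ =>
    obtain ⟨N, hN⟩ := hP
    obtain ⟨N', hN'⟩ := hQ
    refine ⟨max N N', fun M hM a b => ?_⟩
    have h1 : ev (P + Q) a b = ev P a b + ev Q a b := by simp [ev]
    rw [h1, hN M (le_trans (le_max_left _ _) hM), hN' M (le_trans (le_max_right _ _) hM)]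
    simp only [← Finset.sum_add_distrib]
    refine Finset.sum_congr rfl fun k _ => Finset.sum_congr rfl fun l _ => ?_
    simp [cf]
    ring
  | monomial n p =>
    refine ⟨max (n + 1) (p.natDegree + 1), fun M hM a b => ?_⟩
    have h1 : n + 1 ≤ M := le_trans (le_max_left _ _) hM
    have h2 : p.natDegree + 1 ≤ M := le_trans (le_max_right _ _) hM
    rw [Finset.sum_eq_single n]
    · simp only [ev, evalEval, eval_monomial, cf, coeff_monomial, if_true]
      rw [eval_mul, eval_eq_sum_range' (n := M) (by omega), Finset.sum_mul]
      refine Finset.sum_congr rfl fun l _ => ?_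
      simp
      ring
    · intro k _ hk
      refine Finset.sum_eq_zero fun l _ => ?_
      simp [cf, coeff_monomial, Ne.symm hk]
    · intro hn
      rw [Finset.mem_range] at hn
      omega

/-- A polynomial of order `≥ n` is `O(ρⁿ)` on the polydisc of radius `ρ ≤ 1`. -/
lemma ev_bound (P : ℂ[X][X]) (n : ℕ) (hP : FS2.OrdGE n (cf P)) :
    ∃ K : ℝ, 0 ≤ K ∧ ∀ (ρ : ℝ) (a b : ℂ), ρ ≤ 1 → ‖a‖ ≤ ρ → ‖b‖ ≤ ρ →
      ‖ev P a b‖ ≤ K * ρ ^ n := by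
  obtain ⟨N, hN⟩ := ev_eq_sum P
  refine ⟨∑ k ∈ Finset.range N, ∑ l ∈ Finset.range N, ‖cf P k l‖, by positivity, ?_⟩
  intro ρ a b hρ ha hb
  have h0 : 0 ≤ ρ := le_trans (norm_nonneg _) ha
  rw [hN N le_rfl, Finset.sum_mul]
  refine (norm_sum_le _ _).trans (Finset.sum_le_sum fun k _ => ?_)
  rw [Finset.sum_mul]
  refine (norm_sum_le _ _).trans (Finset.sum_le_sum fun l _ => ?_)
  by_cases h : k + l < n
  · simp [hP k l h]
  · rw [norm_mul, norm_mul, norm_pow, norm_pow, mul_assoc]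
    refine mul_le_mul_of_nonneg_left ?_ (norm_nonneg _)
    calc ‖a‖ ^ k * ‖b‖ ^ l ≤ ρ ^ k * ρ ^ l := by gcongr
      _ = ρ ^ (k + l) := (pow_add _ _ _).symm
      _ ≤ ρ ^ n := pow_le_pow_of_le_one h0 hρ (by omega)

lemma ev_conj (P Q : ℂ[X][X]) (hPQ : ∀ k l, cf P k l = conj (cf Q l k)) (a b : ℂ) :
    conj (ev Q a b) = ev P (conj b) (conj a) := by
  obtain ⟨N, hN⟩ := ev_eq_sum P
  obtain ⟨N', hN'⟩ := ev_eq_sum Q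
  rw [hN (max N N') (le_max_left _ _), hN' (max N N') (le_max_right _ _), map_sum,
    Finset.sum_comm]
  simp only [map_sum]
  refine Finset.sum_congr rfl fun k _ => Finset.sum_congr rfl fun l _ => ?_
  rw [hPQ]
  simp
  ring

lemma dwP_add (P Q : ℂ[X][X]) : dwP (P + Q) = dwP P + dwP Q := by
  ext1 k
  simp [coeff_dwP]

lemma dwP_monomial (n : ℕ) (p : ℂ[X]) : dwP (monomial n p) = monomial n (derivative p) := by
  ext1 k
  rw [coeff_dwP, coeff_monomial, coeff_monomial]
  split_ifs <;> simp

/-- Chain rule for the substitution of two differentiable functions in a polynomial. -/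
lemma hasFDerivAt_ev {E : Type*} [NormedAddCommGroup E] [NormedSpace ℝ E]
    (P : ℂ[X][X]) {a b : E → ℂ} {a' b' : E →L[ℝ] ℂ} {x : E}
    (ha : HasFDerivAt a a' x) (hb : HasFDerivAt b b' x) :
    HasFDerivAt (fun y => ev P (a y) (b y))
      (ev (derivative P) (a x) (b x) • a' + ev (dwP P) (a x) (b x) • b') x := by
  induction P using Polynomial.induction_on' with
  | add P Q hP hQ =>
    have := hP.add hQ
    refine (this.congr_fderiv ?_).congr_of_eventuallyEq (Filter.Eventually.of_forall fun y => ?_)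
    · ext v
      simp [ev, dwP_add]
      ring
    · simp [ev]
  | monomial n p =>
    have h1 : HasFDerivAt (fun y => p.eval (b y)) ((derivative p).eval (b x) • b') x :=
      (p.hasDerivAt (b x)).comp_hasFDerivAt_of_eq x hb rfl
    have h2 : HasFDerivAt (fun y => a y ^ n) (((n : ℂ) * a x ^ (n - 1)) • a') x :=
      (hasDerivAt_pow n (a x)).comp_hasFDerivAt_of_eq x ha rfl
    refine ((h1.mul h2).congr_fderiv ?_).congr_of_eventuallyEq
      (Filter.Eventually.of_forall fun y => ?_)
    · ext v
      simp [ev, dwP_monomial, evalEval, eval_monomial, derivative_monomial]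
      ring
    · simp [ev, evalEval, eval_monomial]

lemma contDiff_ev_conj (P : ℂ[X][X]) : ContDiff ℝ 1 (fun z : ℂ => ev P z (conj z)) := by
  obtain ⟨N, hN⟩ := ev_eq_sum P
  simp only [hN N le_rfl]
  have : ContDiff ℝ 1 (fun z : ℂ => conj z) := Complex.conjCLE.contDiff
  fun_prop

/-! ### Motion along the Hamiltonian flow -/

/-- The Hamiltonian vector field `−2i ∂H/∂z̄` in the complex coordinate. -/
def vf (H : ℂ[X][X]) (z : ℂ) : ℂ := -2 * Complex.I * ev (dwP H) z (conj z)

lemma conj_ev_dwP {H : ℂ[X][X]} (hH : FS2.IsReal (cf H)) (z : ℂ) :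
    conj (ev (dwP H) z (conj z)) = ev (derivative H) z (conj z) := by
  rw [ev_conj (derivative H) (dwP H), Complex.conj_conj]
  intro k l
  rw [cf_derivative, cf_dwP, FS2.dz, FS2.dw, hH]
  simp

/-- Along the flow of a real Hamiltonian, `d/dt` acts on polynomial observables as `L_H`. -/
lemma hasDerivAt_ev {H : ℂ[X][X]} (hH : FS2.IsReal (cf H)) (P : ℂ[X][X]) {γ : ℝ → ℂ} {t : ℝ}
    (hγ : HasDerivAt γ (vf H (γ t)) t) :
    HasDerivAt (fun s => ev P (γ s) (conj (γ s))) (ev (lieP H P) (γ t) (conj (γ t))) t := by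
  have hc : HasDerivAt (fun s => conj (γ s)) (conj (vf H (γ t))) t :=
    Complex.conjCLE.toContinuousLinearMap.hasFDerivAt.comp_hasDerivAt t hγ
  have := (hasFDerivAt_ev P hγ.hasFDerivAt hc.hasFDerivAt).hasDerivAt
  refine this.congr_deriv ?_
  simp only [vf, lieP, ev, map_mul, evalEval_mul, evalEval_sub]
  have h2 := conj_ev_dwP hH (γ t)
  simp only [ev] at h2
  have h3 : conj (2 : ℂ) = 2 := Complex.conj_ofNat 2
  simp [h2, h3]
  ring

/-- Taylor's formula with remainder for a chain of functions `u (j+1) = (u j)'` on `[0,1]`. -/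
lemma taylor_chain (n : ℕ) : ∀ (u : ℕ → ℝ → ℂ) (M : ℝ),
    (∀ j, ∀ t ∈ Set.Icc (0 : ℝ) 1, HasDerivAt (u j) (u (j + 1) t) t) →
    (∀ t ∈ Set.Icc (0 : ℝ) 1, ‖u n t‖ ≤ M) → ∀ t ∈ Set.Icc (0 : ℝ) 1,
    ‖u 0 t - ∑ j ∈ Finset.range n, (t : ℂ) ^ j * ((j.factorial : ℂ))⁻¹ * u j 0‖ ≤ M := by
  induction n with
  | zero =>
    intro u M _ hM t ht
    simpa using hM t ht
  | succ n ih =>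
    intro u M hu hM t ht
    have ih' := ih (fun j => u (j + 1)) M (fun j => hu (j + 1)) hM
    set w : ℝ → ℂ := fun t => u 0 t -
      ∑ j ∈ Finset.range (n + 1), (t : ℂ) ^ j * ((j.factorial : ℂ))⁻¹ * u j 0 with hw
    have hd : ∀ s ∈ Set.Icc (0 : ℝ) 1, HasDerivAt w
        (u 1 s - ∑ j ∈ Finset.range n, (s : ℂ) ^ j * ((j.factorial : ℂ))⁻¹ * u (j + 1) 0) s := by
      intro s hs
      refine (hu 0 s hs).sub ?_
      simp only [Finset.sum_range_succ']
      have hsum : HasDerivAt (fun t : ℝ => ∑ j ∈ Finset.range n,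
          (t : ℂ) ^ (j + 1) * (((j + 1).factorial : ℂ))⁻¹ * u (j + 1) 0)
          (∑ j ∈ Finset.range n, (s : ℂ) ^ j * ((j.factorial : ℂ))⁻¹ * u (j + 1) 0) s := by
        refine HasDerivAt.fun_sum fun j _ => ?_
        have h1 : HasDerivAt (fun t : ℝ => (t : ℂ) ^ (j + 1)) (((j : ℂ) + 1) * (s : ℂ) ^ j) s := by
          have := (hasDerivAt_pow (j + 1) (s : ℂ)).comp_ofReal
          simpa using this
        refine ((h1.mul_const _).mul_const _).congr_deriv ?_
        rw [Nat.factorial_succ]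
        have h2 : ((j : ℂ) + 1) ≠ 0 := by exact_mod_cast Nat.succ_ne_zero j
        have h3 : (j.factorial : ℂ) ≠ 0 := by exact_mod_cast j.factorial_ne_zero
        push_cast
        field_simp
      simpa using hsum.add_const (u 0 0)
    have hw0 : w 0 = 0 := by
      simp [hw, Finset.sum_range_succ']
    have := norm_image_sub_le_of_norm_deriv_le_segment' (f := w) (C := M) (a := 0) (b := 1)
      (fun s hs => (hd s hs).hasDerivWithinAt)
      (fun s hs => ih' s ⟨hs.1, hs.2.le⟩) t ht
    rw [hw0, sub_zero, sub_zero] at this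
    have hM0 : 0 ≤ M := (norm_nonneg _).trans (hM t ht)
    exact this.trans (mul_le_of_le_one_right hM0 ht.2)

/-- For a `C¹` vector field with `|v(z)| ≤ K|z|²`, the solution starting at a small `p`
exists on a neighbourhood of `[0,1]` and stays in the disc of radius `2|p|`. -/
lemma exists_flow (v : ℂ → ℂ) (hv : ContDiff ℝ 1 v) (K : ℝ) (hK0 : 0 ≤ K)
    (hK : ∀ z, ‖z‖ ≤ 1 → ‖v z‖ ≤ K * ‖z‖ ^ 2) :
    ∃ δ > 0, δ ≤ 1 / 2 ∧ ∀ p : ℂ, ‖p‖ < δ → ∃ γ : ℝ → ℂ, γ 0 = p ∧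
      ∀ t ∈ Set.Icc (0 : ℝ) 1, HasDerivAt γ (v (γ t)) t ∧ ‖γ t‖ ≤ 2 * ‖p‖ := by
  obtain ⟨K', s, hs, hlip⟩ := (hv.contDiffAt (x := 0)).exists_lipschitzOnWith
  obtain ⟨ε, hε, hεs⟩ := Metric.mem_nhds_iff.1 hs
  refine ⟨min (1 / 2) (min (ε / 2) (1 / (8 * (K + 1)))), by positivity, min_le_left _ _, ?_⟩
  intro p hp
  have hp1 : ‖p‖ < 1 / 2 := hp.trans_le (min_le_left _ _)
  have hp2 : ‖p‖ < ε / 2 := hp.trans_le ((min_le_right _ _).trans (min_le_left _ _))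
  have hp3 : ‖p‖ < 1 / (8 * (K + 1)) := hp.trans_le ((min_le_right _ _).trans (min_le_right _ _))
  rw [lt_div_iff₀ (by positivity)] at hp3
  have ht0 : (0 : ℝ) ∈ Set.Icc (-1 : ℝ) 2 := by norm_num
  have hpl : IsPicardLindelof (fun _ => v) (⟨0, ht0⟩ : Set.Icc (-1 : ℝ) 2) (0 : ℂ)
      (2 * ‖p‖₊) ‖p‖₊ (⟨K, hK0⟩ * (2 * ‖p‖₊) ^ 2) K' := by
    refine IsPicardLindelof.of_time_independent ?_ (hlip.mono fun x hx => hεs ?_) ?_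
    · intro x hx
      have hx' : ‖x‖ ≤ 2 * ‖p‖ := by simpa using hx
      have h1 := hK x (by linarith)
      refine h1.trans ?_
      change K * ‖x‖ ^ 2 ≤ K * (2 * ‖p‖) ^ 2
      gcongr
    · have hx' : ‖x‖ ≤ 2 * ‖p‖ := by simpa using hx
      simp only [Metric.mem_ball, dist_zero_right]
      linarith
    · have : max ((2 : ℝ) - 0) (0 - (-1)) = 2 := by norm_num
      change K * (2 * ‖p‖) ^ 2 * max ((2 : ℝ) - 0) (0 - (-1)) ≤ 2 * ‖p‖ - ‖p‖
      rw [this]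
      nlinarith [norm_nonneg p]
  have hpb : p ∈ Metric.closedBall (0 : ℂ) (‖p‖₊ : ℝ) := by simp
  -- The fixed point of the Picard map takes its values in the closed ball of radius `2‖p‖`.
  obtain ⟨α, hα⟩ := ODE.FunSpace.exists_isFixedPt_next hpl hpb
  have hmem : ∀ t, α.compProj t ∈ Metric.closedBall (0 : ℂ) ((2 * ‖p‖₊ : NNReal) : ℝ) :=
    fun t => α.compProj_mem_closedBall hpl.mul_max_le
  refine ⟨α.compProj, ?_, fun t ht => ⟨?_, ?_⟩⟩
  · have := ODE.FunSpace.compProj_val (α := α) (t := (⟨0, ht0⟩ : Set.Icc (-1 : ℝ) 2))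
    rw [this, ← hα, ODE.FunSpace.next_apply₀]
  · have ht' : t ∈ Set.Icc (-1 : ℝ) 2 := ⟨by linarith [ht.1], by linarith [ht.2]⟩
    have h1 := ODE.hasDerivWithinAt_picard_Icc ht0 hpl.continuousOn_uncurry
      α.continuous_compProj.continuousOn (fun _ _ => hmem _) p ht'
    refine (h1.congr_of_mem (fun t' ht' => ?_) ht').hasDerivAt
      (Icc_mem_nhds (by linarith [ht.1]) (by linarith [ht.2]))
    nth_rw 1 [← hα]
    rw [ODE.FunSpace.compProj_of_mem ht', ODE.FunSpace.next_apply]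
  · simpa using hmem t

/-- The iterated Lie derivatives `L_H^j z`. -/
def obs (H : ℂ[X][X]) : ℕ → ℂ[X][X]
  | 0 => X
  | j + 1 => lieP H (obs H j)

lemma cf_obs (H : ℂ[X][X]) (j : ℕ) : cf (obs H j) = FS2.lieIter (cf H) j (FS2.mono 1 0) := by
  induction j with
  | zero =>
    funext k l
    simp only [obs, cf, FS2.lieIter, FS2.mono, coeff_X]
    by_cases hk : k = 1
    · by_cases hl : l = 0 <;> simp [hk, hl, coeff_one]
    · simp [hk, Ne.symm hk]
  | succ j ih => rw [obs, cf_lieP, ih]; rfl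

/-- The flow of a real Hamiltonian of order `≥ 3` follows its Lie series up to `O(|p|ᵐ)`. -/
lemma flow_sub_lieSeries {H : ℂ[X][X]} (hH : FS2.IsReal (cf H)) (h3 : FS2.Ord3 (cf H)) (m : ℕ) :
    ∃ K : ℝ, 0 ≤ K ∧ ∀ (p : ℂ) (γ : ℝ → ℂ), ‖p‖ ≤ 1 / 2 → γ 0 = p →
      (∀ t ∈ Set.Icc (0 : ℝ) 1, HasDerivAt γ (vf H (γ t)) t ∧ ‖γ t‖ ≤ 2 * ‖p‖) →
      ‖γ 1 - ∑ j ∈ Finset.range m, ((j.factorial : ℂ))⁻¹ * ev (obs H j) p (conj p)‖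
        ≤ K * ‖p‖ ^ m := by
  have hord : FS2.OrdGE m (cf (obs H m)) := by
    rw [cf_obs]
    exact fun k l hkl => FS2.ordGE_lieIter h3 m k l (by omega)
  obtain ⟨K, hK0, hK⟩ := ev_bound (obs H m) m hord
  refine ⟨K * 2 ^ m, by positivity, fun p γ hp h0 hγ => ?_⟩
  have := taylor_chain m (fun j t => ev (obs H j) (γ t) (conj (γ t))) (K * (2 * ‖p‖) ^ m)
    (fun j t ht => hasDerivAt_ev hH (obs H j) (hγ t ht).1)
    (fun t ht => hK (2 * ‖p‖) _ _ (by linarith) (hγ t ht).2 (by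
      rw [RCLike.norm_conj]; exact (hγ t ht).2)) 1 (by simp)
  simp only [h0, ofReal_one, one_pow, one_mul] at this
  have hX : ev (obs H 0) (γ 1) (conj (γ 1)) = γ 1 := by simp [ev, obs]
  rw [hX, mul_pow, ← mul_assoc] at this
  exact this

/-! ### Comparison with the Taylor series -/

lemma isReal_trunc {h : FS2} (hreal : FS2.IsReal h) (m : ℕ) : FS2.IsReal (cf (trunc m h)) := by
  intro k l
  rw [cf_trunc, cf_trunc, add_comm l k, hreal k l]
  split_ifs <;> simp

lemma ord3_trunc {h : FS2} (hord : FS2.Ord3 h) (m : ℕ) : FS2.Ord3 (cf (trunc m h)) := by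
  intro k l hkl
  rw [cf_trunc, hord k l hkl, ite_self]

/-- The Taylor polynomial of `exp(L_h) z` and the Lie series of the truncated Hamiltonian
agree up to `O(ρᵐ)`. -/
lemma taylor_sub_lieSeries {h : FS2} (hord : FS2.Ord3 h) (m : ℕ) :
    ∃ K : ℝ, 0 ≤ K ∧ ∀ p : ℂ, ‖p‖ ≤ 1 →
      ‖ev (trunc m (FS2.expLie h (FS2.mono 1 0))) p (conj p) -
        ∑ j ∈ Finset.range m, ((j.factorial : ℂ))⁻¹ * ev (obs (trunc m h) j) p (conj p)‖
        ≤ K * ‖p‖ ^ m := by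
  set Q : ℂ[X][X] := trunc m (FS2.expLie h (FS2.mono 1 0)) -
    ∑ j ∈ Finset.range m, C (C ((j.factorial : ℂ))⁻¹) * obs (trunc m h) j with hQ
  have hag : FS2.AgreeLT (m + 1) h (cf (trunc m h)) := by
    intro k l hkl
    rw [cf_trunc, if_pos (by omega)]
  have hQord : FS2.OrdGE m (cf Q) := by
    intro k l hkl
    rw [hQ, cf_sub, Pi.sub_apply, Pi.sub_apply, cf_trunc, if_pos hkl.le, cf_sum,
      FS2.expLie_eq_sum hord hkl, sub_eq_zero]
    refine Finset.sum_congr rfl fun j _ => ?_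
    rw [cf_CC_mul, cf_obs,
      FS2.agreeLT_lieIter hord (ord3_trunc hord m) hag j (FS2.mono 1 0) k l hkl]
    rfl
  obtain ⟨K, hK0, hK⟩ := ev_bound Q m hQord
  refine ⟨K, hK0, fun p hp => ?_⟩
  have := hK ‖p‖ p (conj p) hp le_rfl (by rw [RCLike.norm_conj])
  have he : ev Q p (conj p) = ev (trunc m (FS2.expLie h (FS2.mono 1 0))) p (conj p) -
      ∑ j ∈ Finset.range m, ((j.factorial : ℂ))⁻¹ * ev (obs (trunc m h) j) p (conj p) := by
    simp only [hQ, ev, evalEval_sub, evalEval_finsetSum, evalEval_mul, evalEval_CC]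
  rwa [he] at this

/-! ### Real coordinates -/

/-- The complex coordinate `z = x + iy`. -/
def zeta (p : ℝ × ℝ) : ℂ := (p.1 : ℂ) + (p.2 : ℂ) * Complex.I

lemma conj_zeta (p : ℝ × ℝ) : conj (zeta p) = (p.1 : ℂ) - (p.2 : ℂ) * Complex.I := by
  simp [zeta, sub_eq_add_neg]

lemma zeta_re (p : ℝ × ℝ) : (zeta p).re = p.1 := by simp [zeta]

lemma zeta_im (p : ℝ × ℝ) : (zeta p).im = p.2 := by simp [zeta]

lemma zeta_re_im (z : ℂ) : zeta (z.re, z.im) = z := Complex.re_add_im z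

lemma norm_le_norm_zeta (p : ℝ × ℝ) : ‖p‖ ≤ ‖zeta p‖ := by
  rw [Prod.norm_def, Real.norm_eq_abs, Real.norm_eq_abs]
  refine max_le ?_ ?_
  · simpa [zeta_re] using Complex.abs_re_le_norm (zeta p)
  · simpa [zeta_im] using Complex.abs_im_le_norm (zeta p)

lemma norm_zeta_le (p : ℝ × ℝ) : ‖zeta p‖ ≤ 2 * ‖p‖ := by
  have h1 := norm_fst_le p
  have h2 := norm_snd_le p
  have := norm_add_le (p.1 : ℂ) ((p.2 : ℂ) * Complex.I)
  simp only [norm_mul, Complex.norm_I, mul_one, Complex.norm_real] at this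
  unfold zeta
  linarith

lemma continuous_zeta : Continuous zeta := by
  unfold zeta
  fun_prop

lemma hasFDerivAt_zeta (p : ℝ × ℝ) : HasFDerivAt zeta
    (Complex.ofRealCLM.comp (ContinuousLinearMap.fst ℝ ℝ ℝ) +
      Complex.I • Complex.ofRealCLM.comp (ContinuousLinearMap.snd ℝ ℝ ℝ)) p := by
  refine (ContinuousLinearMap.hasFDerivAt _).congr_of_eventuallyEq
    (Filter.Eventually.of_forall fun q => ?_)
  simp [zeta, mul_comm]

lemma polyHam_eq {h : FS2} (hord : FS2.Ord3 h) (m : ℕ) (p : ℝ × ℝ) :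
    polyHam h m p = (ev (trunc m h) (zeta p) (conj (zeta p))).re := by
  rw [ev_trunc, polyHam, conj_zeta, zeta]
  congr 1
  refine Finset.sum_congr rfl fun k _ => Finset.sum_congr rfl fun l _ => ?_
  by_cases h3 : 3 ≤ k + l
  · simp [h3]
  · simp [hord k l (by omega)]

/-- In the complex coordinate the field `(∂Ĥ/∂y, −∂Ĥ/∂x)` is `−2i ∂H/∂z̄`. -/
lemma hamVF_eq {h : FS2} (hreal : FS2.IsReal h) (hord : FS2.Ord3 h) (m : ℕ) (p : ℝ × ℝ) :
    hamVF (polyHam h m) p = ((vf (trunc m h) (zeta p)).re, (vf (trunc m h) (zeta p)).im) := by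
  have hc : HasFDerivAt (fun q => conj (zeta q)) _ p :=
    Complex.conjCLE.toContinuousLinearMap.hasFDerivAt.comp p (hasFDerivAt_zeta p)
  have h1 := Complex.reCLM.hasFDerivAt.comp p
    (hasFDerivAt_ev (trunc m h) (hasFDerivAt_zeta p) hc)
  have h2 : polyHam h m = Complex.reCLM ∘ fun q => ev (trunc m h) (zeta q) (conj (zeta q)) :=
    funext fun q => polyHam_eq hord m q
  rw [← h2] at h1
  rw [hamVF, h1.fderiv, vf, ← conj_ev_dwP (isReal_trunc hreal m)]
  ext
  · simp
    ring
  · simp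
    ring

end BiPoly

open BiPoly ComplexConjugate in
/-- **Approximation by the time-one map of a polynomial Hamiltonian flow.**
Let `F` be a real-analytic area-preserving map near the origin, tangent to the
identity, with formal interpolating Hamiltonian `h` (so that its Taylor series in
complex coordinates satisfies `f = exp(L_h) z`).  For every `m ≥ 3`, the time-one map
`Φ¹` of the Hamiltonian flow of the polynomial `Ĥ_m = Σ_{p=3}^m h_p`, defined near the
origin, satisfies `F = Φ¹ + O(r^m)`. -/
theorem approximation_by_time_one_map
    (F : ℝ × ℝ → ℝ × ℝ) (U : Set (ℝ × ℝ)) (hU : IsOpen U) (h0U : (0, 0) ∈ U)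
    (hFan : AnalyticOnNhd ℝ F U)
    (hF0 : F (0, 0) = (0, 0))
    (hDF : fderiv ℝ F (0, 0) = ContinuousLinearMap.id ℝ (ℝ × ℝ))
    (harea : ∀ p ∈ U,
      LinearMap.det ((fderiv ℝ F p : (ℝ × ℝ) →L[ℝ] (ℝ × ℝ)) : (ℝ × ℝ) →ₗ[ℝ] (ℝ × ℝ)) = 1)
    (c : FS2) (hc : TaylorCoeffs F c)
    (h : FS2) (hreal : FS2.IsReal h) (hord : FS2.Ord3 h)
    (hinterp : c = FS2.expLie h (FS2.mono 1 0))
    (m : ℕ) (hm : 3 ≤ m) :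
    ∃ (Φ : ℝ × ℝ → ℝ × ℝ) (V : Set (ℝ × ℝ)), IsOpen V ∧ (0, 0) ∈ V ∧
      (∀ p ∈ V, ∃ γ : ℝ → ℝ × ℝ, γ 0 = p ∧
        (∀ t ∈ Set.Icc (0 : ℝ) 1, HasDerivAt γ (hamVF (polyHam h m) (γ t)) t) ∧
        γ 1 = Φ p) ∧
      ∃ C > 0, ∃ δ > 0, ∀ p : ℝ × ℝ, ‖p‖ < δ → ‖F p - Φ p‖ ≤ C * ‖p‖ ^ m := by
  classical
  set H := trunc m h with hH
  have hHr := isReal_trunc hreal m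
  have hH3 := ord3_trunc hord m
  have hdw : FS2.OrdGE 2 (cf (dwP H)) := by
    rw [cf_dwP]
    exact FS2.OrdGE.dw (n := 2) hH3
  obtain ⟨K, hK0, hK⟩ := ev_bound (dwP H) 2 hdw
  obtain ⟨δ, hδ, hδ2, hflow⟩ := exists_flow (vf H)
    (contDiff_const.mul (contDiff_ev_conj (dwP H))) (2 * K) (by positivity) (fun z hz => by
      have := hK ‖z‖ z (conj z) hz le_rfl (by rw [RCLike.norm_conj])
      simp only [vf, norm_mul, norm_neg, Complex.norm_I, Complex.norm_ofNat]
      linarith)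
  choose! γ hγ0 hγ using hflow
  obtain ⟨K₁, hK₁0, hK₁⟩ := flow_sub_lieSeries hHr hH3 m
  obtain ⟨K₂, hK₂0, hK₂⟩ := taylor_sub_lieSeries hord m
  have hT := ((hc m).def (c := 1) one_pos)
  obtain ⟨ε, hε, hεT⟩ := Metric.eventually_nhds_iff.1 hT
  refine ⟨fun p => ((γ (zeta p) 1).re, (γ (zeta p) 1).im), {p | ‖zeta p‖ < δ},
    isOpen_lt continuous_zeta.norm continuous_const, by simpa [zeta] using hδ, ?_, ?_⟩
  · intro p hp
    refine ⟨fun t => ((γ (zeta p) t).re, (γ (zeta p) t).im), ?_, fun t ht => ?_, rfl⟩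
    · simp only [hγ0 _ hp, zeta_re, zeta_im]
    · have hd := (hγ _ hp t ht).1
      rw [hamVF_eq hreal hord, zeta_re_im]
      exact (Complex.reCLM.hasFDerivAt.comp_hasDerivAt t hd).prodMk
        (Complex.imCLM.hasFDerivAt.comp_hasDerivAt t hd)
  · refine ⟨1 + (K₁ + K₂) * 2 ^ m, by positivity, min ε (δ / 2), by positivity, fun p hp => ?_⟩
    have hz := norm_zeta_le p
    have hpδ : ‖zeta p‖ < δ := by linarith [hp.trans_le (min_le_right _ _)]
    have h1 : ‖zeta (F p) - ev (trunc m c) (zeta p) (conj (zeta p))‖ ≤ ‖p‖ ^ m := by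
      have := hεT (y := p) (by simpa using hp.trans_le (min_le_left _ _))
      rw [ev_trunc, conj_zeta]
      simpa [zeta] using this
    have h2 := hK₁ (zeta p) (γ (zeta p)) (by linarith) (hγ0 _ hpδ) (hγ _ hpδ)
    have h3 := hK₂ (zeta p) (by linarith)
    rw [← hinterp] at h3
    have h4 : ‖zeta (F p) - γ (zeta p) 1‖ ≤ ‖p‖ ^ m + K₂ * ‖zeta p‖ ^ m + K₁ * ‖zeta p‖ ^ m := by
      refine le_trans ?_ (add_le_add (add_le_add h1 h3) h2)
      rw [← norm_neg (γ (zeta p) 1 - _)]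
      refine le_trans (le_of_eq ?_) (norm_add₃_le)
      congr 1
      ring
    have h5 : ‖zeta p‖ ^ m ≤ 2 ^ m * ‖p‖ ^ m := by
      rw [← mul_pow]
      gcongr
    have h6 : zeta (F p - ((γ (zeta p) 1).re, (γ (zeta p) 1).im)) =
        zeta (F p) - γ (zeta p) 1 := by
      generalize γ (zeta p) 1 = w
      apply Complex.ext <;> simp [zeta]
    refine (norm_le_norm_zeta _).trans ?_
    rw [h6]
    refine h4.trans ?_
    nlinarith [mul_le_mul_of_nonneg_left h5 hK₁0, mul_le_mul_of_nonneg_left h5 hK₂0]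

end
end

section
/- Let n≥5 and m≥1. The set H^n_m of real-valued polynomials in z,z̄ that are complex linear combinations of resonant monomials of δ-order m is a real vector space of dimension 1 + 2⌊m/2⌋. Explicitly, the resonant monomials of δ-order m are exactly Q_{m,0}=zᵐz̄ᵐ and, for 1≤j≤⌊m/2⌋, Q_{m,j}=z^{m+(n−2)j}z̄^{m−2j} and Q_{m,−j}=z^{m−2j}z̄^{m+(n−2)j}. -/
/-!
For `k = l + d` with `d ≥ 0`, resonance says `d = n * j`, and then the δ-order is
`(2l + nj)/2 - (n-4)j/2 = l + 2j`. Setting this equal to `m` leaves exactly one monomial for each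
`0 ≤ j ≤ m/2` (`isResMono_add_iff`); the case `k < l` is its mirror image, which gives the list of
resonant monomials (`isResMono_iff`).

The dimension follows by reading off coefficients. By reality, an element of `H^n_m` is
determined by its coefficients at the monomials with `k ≥ l`. The one on the diagonal is real and
the `m / 2` others are arbitrary complex numbers, so `H^n_m` is isomorphic over `ℝ` to
`ℝ × (Fin (m / 2) → ℂ)` through the map `coeffMap`.
-/

open Complex Finset Asymptotics

noncomputable section

/-- The δ-order of the monomial `z^k z̄^l` (for resonance order `n`):
`δ = (k+l)/2 − ((n−4)/(2n))·|k−l|`. -/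
def deltaOrd (n k l : ℕ) : ℚ :=
  (k + l : ℚ) / 2 - ((n : ℚ) - 4) / (2 * n) * |(k : ℚ) - (l : ℚ)|

/-- `z^k z̄^l` is a resonant monomial of δ-order `m`. -/
def IsResMono (n : ℕ) (m : ℚ) (k l : ℕ) : Prop :=
  (k : ZMod n) = (l : ZMod n) ∧ deltaOrd n k l = m

/-- `H^n_m`: the real vector space of real-valued polynomials supported on
resonant monomials of δ-order `m`. -/
def Hspace (n : ℕ) (m : ℚ) : Submodule ℝ FS2 where
  carrier := {h | FS2.IsReal h ∧ ∀ k l, h k l ≠ 0 → IsResMono n m k l}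
  zero_mem' := by
    refine ⟨fun k l => by simp, fun k l hkl => absurd rfl hkl⟩
  add_mem' := by
    rintro a b ⟨ha1, ha2⟩ ⟨hb1, hb2⟩
    refine ⟨fun k l => ?_, fun k l hkl => ?_⟩
    · show a k l + b k l = (starRingEnd ℂ) (a l k + b l k)
      rw [map_add, ← ha1 k l, ← hb1 k l]
    · by_cases h : a k l = 0
      · refine hb2 k l fun hb0 => hkl ?_
        show a k l + b k l = 0
        rw [h, hb0, add_zero]
      · exact ha2 k l h
  smul_mem' := by
    rintro r a ⟨ha1, ha2⟩
    refine ⟨fun k l => ?_, fun k l hkl => ?_⟩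
    · show r • a k l = (starRingEnd ℂ) (r • a l k)
      rw [ha1 k l, Complex.real_smul, Complex.real_smul, map_mul, Complex.conj_ofReal]
    · refine ha2 k l fun h0 => hkl ?_
      show r • a k l = 0
      rw [h0, smul_zero]


theorem isResMono_comm (n : ℕ) (m : ℚ) (k l : ℕ) : IsResMono n m k l ↔ IsResMono n m l k := by
  unfold IsResMono deltaOrd
  rw [abs_sub_comm, add_comm (k : ℚ), eq_comm (a := (k : ZMod n))]

theorem deltaOrd_add_mul (n l j : ℕ) (hn : 5 ≤ n) :
    deltaOrd n (l + n * j) l = l + 2 * j := by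
  have h0 : (n : ℚ) ≠ 0 := by
    have : n ≠ 0 := by omega
    exact_mod_cast this
  have h1 : |((l + n * j : ℕ) : ℚ) - (l : ℚ)| = n * j := by
    push_cast
    rw [add_sub_cancel_left]
    exact abs_of_nonneg (by positivity)
  unfold deltaOrd
  rw [h1]
  push_cast
  field_simp
  ring

/-- The resonant monomials of δ-order `m` on or below the diagonal, parametrised by the
quotient `j` of `k - l` by `n`. -/
theorem isResMono_add_iff (n m l d : ℕ) (hn : 5 ≤ n) :
    IsResMono n (m : ℚ) (l + d) l ↔ ∃ j, d = n * j ∧ l + 2 * j = m := by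
  constructor
  · rintro ⟨hr, hd⟩
    have hdvd : n ∣ d := by
      rw [← ZMod.natCast_eq_zero_iff]
      simpa using hr
    obtain ⟨j, rfl⟩ := hdvd
    refine ⟨j, rfl, ?_⟩
    rw [deltaOrd_add_mul n l j hn] at hd
    exact_mod_cast hd
  · rintro ⟨j, rfl, hj⟩
    refine ⟨by simp, ?_⟩
    rw [deltaOrd_add_mul n l j hn, ← hj]
    push_cast
    ring

theorem isResMono_iff_of_le (n m k l : ℕ) (hn : 5 ≤ n) (hlk : l ≤ k) :
    IsResMono n (m : ℚ) k l ↔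
      ∃ j, j ≤ m / 2 ∧ k = m + (n - 2) * j ∧ l = m - 2 * j := by
  obtain ⟨d, rfl⟩ := Nat.exists_eq_add_of_le hlk
  rw [isResMono_add_iff n m l d hn]
  have key : ∀ j, n * j = (n - 2) * j + 2 * j := fun j => by
    rw [← Nat.add_mul, Nat.sub_add_cancel (by omega)]
  constructor
  · rintro ⟨j, hd, hj⟩
    have := key j
    exact ⟨j, by omega, by omega, by omega⟩
  · rintro ⟨j, hj, hk, hl⟩
    have := key j
    exact ⟨j, by omega, by omega⟩

theorem isResMono_iff (n m : ℕ) (hn : 5 ≤ n) (k l : ℕ) : IsResMono n (m : ℚ) k l ↔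
      (k = m ∧ l = m) ∨
      ∃ j : ℕ, 1 ≤ j ∧ j ≤ m / 2 ∧
        ((k = m + (n - 2) * j ∧ l = m - 2 * j) ∨
         (k = m - 2 * j ∧ l = m + (n - 2) * j)) := by
  constructor
  · intro h
    rcases le_total l k with hlk | hkl
    · obtain ⟨j, hj, hk, hl⟩ := (isResMono_iff_of_le n m k l hn hlk).1 h
      rcases Nat.eq_zero_or_pos j with rfl | hpos
      · exact Or.inl ⟨by simpa using hk, by simpa using hl⟩
      · exact Or.inr ⟨j, hpos, hj, Or.inl ⟨hk, hl⟩⟩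
    · rw [isResMono_comm] at h
      obtain ⟨j, hj, hl, hk⟩ := (isResMono_iff_of_le n m l k hn hkl).1 h
      rcases Nat.eq_zero_or_pos j with rfl | hpos
      · exact Or.inl ⟨by simpa using hk, by simpa using hl⟩
      · exact Or.inr ⟨j, hpos, hj, Or.inr ⟨hk, hl⟩⟩
  · rintro (⟨rfl, rfl⟩ | ⟨j, -, hj, ⟨hk, hl⟩ | ⟨hk, hl⟩⟩)
    · exact (isResMono_iff_of_le n _ _ _ hn le_rfl).2 ⟨0, by omega, by simp, by simp⟩
    · exact (isResMono_iff_of_le n m k l hn (by omega)).2 ⟨j, hj, hk, hl⟩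
    · rw [isResMono_comm]
      exact (isResMono_iff_of_le n m l k hn (by omega)).2 ⟨j, hj, hl, hk⟩

/-- The coefficients of an element of `H^n_m` at `Q_{m,0}` (real part) and at
`Q_{m,1}, …, Q_{m,⌊m/2⌋}`; the index `j : Fin (m / 2)` stands for `Q_{m,j+1}`. -/
def coeffMap (n m : ℕ) : Hspace n (m : ℚ) →ₗ[ℝ] ℝ × (Fin (m / 2) → ℂ) where
  toFun h := ((h.1 m m).re, fun j => h.1 (m + (n - 2) * (j + 1)) (m - 2 * (j + 1)))
  map_add' _ _ := rfl
  map_smul' r h := by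
    ext
    · simp
    · rfl

theorem coeffMap_injective (n m : ℕ) (hn : 5 ≤ n) : Function.Injective (coeffMap n m) := by
  rw [← LinearMap.ker_eq_bot, LinearMap.ker_eq_bot']
  rintro ⟨h, hreal, hsupp⟩ h0
  have hdiag : (h m m).re = 0 := congrArg Prod.fst h0
  have hoff : ∀ j : Fin (m / 2), h (m + (n - 2) * (j + 1)) (m - 2 * (j + 1)) = 0 :=
    fun j => congrFun (congrArg Prod.snd h0) j
  have hoff' : ∀ j, 1 ≤ j → j ≤ m / 2 → h (m + (n - 2) * j) (m - 2 * j) = 0 := by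
    intro j h1 h2
    have := hoff ⟨j - 1, by omega⟩
    simpa only [Nat.sub_add_cancel h1] using this
  apply Subtype.ext
  funext k l
  show h k l = 0
  by_contra hne
  rcases (isResMono_iff n m hn k l).1 (hsupp k l hne) with
    ⟨rfl, rfl⟩ | ⟨j, h1, h2, ⟨rfl, rfl⟩ | ⟨rfl, rfl⟩⟩
  · -- `h m m` equals its own conjugate, hence is determined by its real part.
    apply hne
    rw [← Complex.conj_eq_iff_re.1 (hreal _ _).symm, hdiag, Complex.ofReal_zero]
  · exact hne (hoff' j h1 h2)
  · apply hne
    rw [hreal, hoff' j h1 h2, map_zero]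

/-- The real-valued polynomial with coefficient `r` at `Q_{m,0}`, `c j` at `Q_{m,j+1}` and
`conj (c j)` at `Q_{m,-(j+1)}`. -/
def ofCoeffs (n m : ℕ) (r : ℝ) (c : Fin (m / 2) → ℂ) : FS2 := fun k l =>
  (if k = m ∧ l = m then (r : ℂ) else 0) +
    ∑ j : Fin (m / 2),
      ((if k = m + (n - 2) * (j + 1) ∧ l = m - 2 * (j + 1) then c j else 0) +
        (if l = m + (n - 2) * (j + 1) ∧ k = m - 2 * (j + 1) then (starRingEnd ℂ) (c j) else 0))

theorem ofCoeffs_mem (n m : ℕ) (hn : 5 ≤ n) (r : ℝ) (c : Fin (m / 2) → ℂ) :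
    ofCoeffs n m r c ∈ Hspace n (m : ℚ) := by
  refine ⟨fun k l => ?_, fun k l hne => ?_⟩
  · unfold ofCoeffs
    rw [map_add, map_sum]
    congr 1
    · simp only [apply_ite (starRingEnd ℂ), Complex.conj_ofReal, map_zero, and_comm]
    · refine Finset.sum_congr rfl fun j _ => ?_
      simp only [map_add, apply_ite (starRingEnd ℂ), Complex.conj_conj, map_zero]
      rw [add_comm]
  · rw [isResMono_iff n m hn]
    by_contra hcon
    rw [not_or] at hcon
    obtain ⟨hc1, hc2⟩ := hcon
    apply hne
    unfold ofCoeffs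
    rw [if_neg hc1, zero_add]
    refine Finset.sum_eq_zero fun j _ => ?_
    have hj : (j : ℕ) + 1 ≤ m / 2 := j.2
    rw [if_neg fun h => hc2 ⟨j + 1, by omega, hj, Or.inl h⟩,
      if_neg fun h => hc2 ⟨j + 1, by omega, hj, Or.inr h.symm⟩, add_zero]

theorem coeffMap_surjective (n m : ℕ) (hn : 5 ≤ n) : Function.Surjective (coeffMap n m) := by
  rintro ⟨r, c⟩
  refine ⟨⟨ofCoeffs n m r c, ofCoeffs_mem n m hn r c⟩, Prod.ext ?_ (funext fun i => ?_)⟩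
  · show (ofCoeffs n m r c m m).re = r
    have : ofCoeffs n m r c m m = r := by
      unfold ofCoeffs
      rw [if_pos ⟨rfl, rfl⟩, Finset.sum_eq_zero, add_zero]
      intro j _
      have hj := j.2
      rw [if_neg (by omega), if_neg (by omega), add_zero]
    rw [this, Complex.ofReal_re]
  · show ofCoeffs n m r c (m + (n - 2) * (i + 1)) (m - 2 * (i + 1)) = c i
    have hi := i.2
    unfold ofCoeffs
    rw [if_neg (by omega), zero_add, Finset.sum_eq_single i]
    · rw [if_pos ⟨rfl, rfl⟩, if_neg (by omega), add_zero]
    · -- The exponent `m - 2 * (j + 1)` of `z̄` determines `j`.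
      intro j _ hji
      have hj := j.2
      have hji' : (j : ℕ) ≠ i := fun h => hji (Fin.ext h)
      rw [if_neg (by omega), if_neg (by omega), add_zero]
    · exact fun h => absurd (Finset.mem_univ i) h

/-- **Dimension of `H^n_m` for `n ≥ 5`, `m ≥ 1`.**
The space of real-valued polynomials supported on resonant monomials of δ-order `m`
has real dimension `1 + 2⌊m/2⌋`; moreover the resonant monomials of δ-order `m` are
exactly `Q_{m,0} = z^m z̄^m` and `Q_{m,±j} = z^{m+(n−2)j} z̄^{m−2j}` (and its mirror)
for `1 ≤ j ≤ ⌊m/2⌋`. -/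
theorem dim_Hspace (n m : ℕ) (hn : 5 ≤ n) (hm : 1 ≤ m) :
    Module.finrank ℝ (Hspace n (m : ℚ)) = 1 + 2 * (m / 2) ∧
    ∀ k l : ℕ, IsResMono n (m : ℚ) k l ↔
      (k = m ∧ l = m) ∨
      ∃ j : ℕ, 1 ≤ j ∧ j ≤ m / 2 ∧
        ((k = m + (n - 2) * j ∧ l = m - 2 * j) ∨
         (k = m - 2 * j ∧ l = m + (n - 2) * j)) := by
  refine ⟨?_, isResMono_iff n m hn⟩
  rw [(LinearEquiv.ofBijective (coeffMap n m)
    ⟨coeffMap_injective n m hn, coeffMap_surjective n m hn⟩).finrank_eq]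
  rw [Module.finrank_prod, Module.finrank_self, Module.finrank_pi_fintype]
  simp [Complex.finrank_real_complex, mul_comm]

end
end

section
/- Let n≥4 and let (k₁,l₁) and (k₂,l₂) be pairs of nonnegative integers with k₁≡l₁ (mod n) and k₂≡l₂ (mod n), of δ-orders m₁ and m₂ respectively. Then {z^{k₁}z̄^{l₁}, z^{k₂}z̄^{l₂}} = (k₁l₂ − k₂l₁)·z^{k₁+k₂−1}z̄^{l₁+l₂−1}, and whenever k₁l₂ − k₂l₁ ≠ 0 this is a resonant monomial (its exponents satisfy (k₁+k₂−1) ≡ (l₁+l₂−1) mod n) whose δ-order m satisfies m ≥ m₁ + m₂ − 1. -/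
/-!
On monomials, `∂/∂z` and `∂/∂z̄` lower an exponent and multiply by it, and the product adds
exponents, so the bracket formula is a direct computation; truncated subtraction in an exponent
is harmless because it only happens when the coefficient is `0`. A nonzero coefficient forces
`k₁ + k₂ ≥ 1` and `l₁ + l₂ ≥ 1`, so the exponents of the result are genuine. Its half-degree is
then the sum of the half-degrees minus `1`, while its difference of exponents is the sum of the
two differences. Resonance is therefore preserved, and since `(n-4)/(2n) ≥ 0`, the δ-order bound
is the triangle inequality.
-/

open Complex Finset Asymptotics

noncomputable section

theorem FS2.dz_mono (a b : ℕ) : FS2.dz (FS2.mono a b) = (a : ℂ) • FS2.mono (a - 1) b := by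
  funext k l
  simp only [FS2.dz, FS2.mono, Pi.smul_apply, smul_eq_mul]
  rcases a with _ | a
  · simp
  · by_cases h : k = a <;> simp [h]

theorem FS2.dw_mono (a b : ℕ) : FS2.dw (FS2.mono a b) = (b : ℂ) • FS2.mono a (b - 1) := by
  funext k l
  simp only [FS2.dw, FS2.mono, Pi.smul_apply, smul_eq_mul]
  rcases b with _ | b
  · simp
  · by_cases h : l = b <;> simp [h]

theorem FS2.mul_smul_smul (x y : ℂ) (f g : FS2) :
    FS2.mul (x • f) (y • g) = (x * y) • FS2.mul f g := by
  funext k l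
  simp only [FS2.mul, Pi.smul_apply, smul_eq_mul, Finset.mul_sum]
  exact Finset.sum_congr rfl fun p _ => Finset.sum_congr rfl fun q _ => by ring

theorem FS2.mul_mono (a b c d : ℕ) :
    FS2.mul (FS2.mono a b) (FS2.mono c d) = FS2.mono (a + c) (b + d) := by
  funext k l
  simp only [FS2.mul, FS2.mono]
  by_cases h : k = a + c ∧ l = b + d
  · obtain ⟨rfl, rfl⟩ := h
    rw [Finset.sum_eq_single a, Finset.sum_eq_single b]
    · simp
    · intro q _ hq
      simp [hq]
    · intro hb
      exact absurd (Finset.mem_range.2 (by omega)) hb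
    · intro p _ hp
      simp [hp]
    · intro ha
      exact absurd (Finset.mem_range.2 (by omega)) ha
  · rw [if_neg h]
    refine Finset.sum_eq_zero fun p hp => Finset.sum_eq_zero fun q hq => ?_
    rw [Finset.mem_range] at hp hq
    by_cases h1 : p = a ∧ q = b
    · rw [if_neg (by omega : ¬(k - p = c ∧ l - q = d)), mul_zero]
    · rw [if_neg h1, zero_mul]

/-- **Poisson bracket of resonant monomials (n ≥ 4).**
`{z^{k₁}z̄^{l₁}, z^{k₂}z̄^{l₂}} = (k₁l₂ − k₂l₁) z^{k₁+k₂−1} z̄^{l₁+l₂−1}`, and whenever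
the coefficient is nonzero the result is a resonant monomial whose δ-order is at least
`m₁ + m₂ − 1`. -/
theorem pb_resonant_monomials
    (n : ℕ) (hn : 4 ≤ n) (k1 l1 k2 l2 : ℕ)
    (h1 : (k1 : ZMod n) = (l1 : ZMod n)) (h2 : (k2 : ZMod n) = (l2 : ZMod n)) :
    FS2.pb (FS2.mono k1 l1) (FS2.mono k2 l2) =
      ((k1 : ℂ) * l2 - (k2 : ℂ) * l1) • FS2.mono (k1 + k2 - 1) (l1 + l2 - 1) ∧
    ((k1 : ℤ) * l2 - (k2 : ℤ) * l1 ≠ 0 →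
      ((k1 + k2 - 1 : ℕ) : ZMod n) = ((l1 + l2 - 1 : ℕ) : ZMod n) ∧
      deltaOrd n k1 l1 + deltaOrd n k2 l2 - 1 ≤ deltaOrd n (k1 + k2 - 1) (l1 + l2 - 1)) := by
  constructor
  · rw [FS2.pb, FS2.dz_mono, FS2.dw_mono, FS2.dw_mono, FS2.dz_mono, FS2.mul_smul_smul,
      FS2.mul_smul_smul, FS2.mul_mono, FS2.mul_mono, sub_smul, mul_comm (l1 : ℂ) (k2 : ℂ)]
    congr 1
    · rcases k1 with _ | k1
      · simp
      rcases l2 with _ | l2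
      · simp
      congr 2 <;> omega
    · rcases k2 with _ | k2
      · simp
      rcases l1 with _ | l1
      · simp
      congr 2 <;> omega
  · intro h
    have hk : 1 ≤ k1 + k2 := by
      by_contra hc
      obtain ⟨rfl, rfl⟩ : k1 = 0 ∧ k2 = 0 := by omega
      simp at h
    have hl : 1 ≤ l1 + l2 := by
      by_contra hc
      obtain ⟨rfl, rfl⟩ : l1 = 0 ∧ l2 = 0 := by omega
      simp at h
    constructor
    · push_cast [Nat.cast_sub hk, Nat.cast_sub hl]
      rw [h1, h2]
    · have hn' : (4 : ℚ) ≤ n := by exact_mod_cast hn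
      have hc : 0 ≤ ((n : ℚ) - 4) / (2 * n) := div_nonneg (by linarith) (by linarith)
      have habs := mul_le_mul_of_nonneg_left
        (abs_add_le ((k1 : ℚ) - l1) ((k2 : ℚ) - l2)) hc
      have hdiff : (k1 : ℚ) + k2 - 1 - (l1 + l2 - 1) = (k1 - l1) + (k2 - l2) := by ring
      simp only [deltaOrd]
      push_cast [Nat.cast_sub hk, Nat.cast_sub hl]
      rw [hdiff]
      linarith

end
end

section
/- Fix n≥5 and real numbers a₀≠0, b₀≠0, and set h₂ = b₀zⁿ + a₀z²z̄² + b₀z̄ⁿ. For p≥2 define the homological operator L_p: H^n_p → H^n_{p+1} by L_p(χ) = the projection onto δ-order p+1 of 2i{χ, h₂}. Then for every even p=2k≥2: the kernel of L_p is one-dimensional (as a real vector space), and one has the direct sum decomposition H^n_{p+1} = L_p(H^n_p) ⊕ ℝ·Q_{p+1,0}; in particular the image of L_p has real codimension 1 in H^n_{p+1}. -/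
/-!
On `z^k z̄^l` with `|k - l| = j n` the δ-order is `min k l + 2 j`, so an element of `H^n_m` is
determined, by reality, by its coefficients `C j` at `z^{l + j n} z̄^l`, `l + 2 j = m`, with `C 0`
real (`ext_of_coeffs`). Bracketing with `a₀ z² z̄²` preserves `j`, and bracketing with
`b₀ (zⁿ + z̄ⁿ)` moves `j` outwards by one; the inward moves have the wrong δ-order because `n ≥ 5`.
Hence the image of `L_p` has vanishing coefficient at `Q_{p+1,0}` (`homOp_diag`), and its
coefficient at `Q_{p+1,j+1}` is `2 i n (2 a₀ (j+1) C (j+1) - b₀ (p - 2j) C j)` (`homOp_coeff`).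

For even `p` the index `j` runs over the same range in orders `p` and `p + 1`, so since `a₀ ≠ 0`
this two-term recursion determines `C (j+1)` from `C j` and the prescribed image coefficient, for
every choice of the real number `C 0`. The free parameter `C 0` spans the kernel, and every
element of `H^n_{p+1}` is reached up to its `Q_{p+1,0}` coefficient.
-/

open Complex Finset Asymptotics

noncomputable section

/-- Projection of a series onto its resonant part of δ-order `m`. -/
def projRes (n : ℕ) (m : ℚ) (h : FS2) : FS2 := fun k l =>
  if (k : ZMod n) = (l : ZMod n) ∧ deltaOrd n k l = m then h k l else 0

/-- The leading part `h₂ = b₀ zⁿ + a₀ z²z̄² + b₀ z̄ⁿ`. -/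
def h2lead (n : ℕ) (a0 b0 : ℝ) : FS2 := fun k l =>
  if k = n ∧ l = 0 then (b0 : ℂ)
  else if k = 2 ∧ l = 2 then (a0 : ℂ)
  else if k = 0 ∧ l = n then (b0 : ℂ)
  else 0

/-- The homological operator `L_p(χ) = proj_{δ-order p+1} (2i{χ, h₂})`. -/
def homOp (n : ℕ) (a0 b0 : ℝ) (p : ℕ) (χ : FS2) : FS2 :=
  projRes n ((p : ℚ) + 1) ((2 * Complex.I) • FS2.pb χ (h2lead n a0 b0))

namespace HomOp

/-! ### The Poisson bracket with `h₂` in coefficients -/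

lemma mul_smul_mono (f : FS2) (c : ℂ) (a b k l : ℕ) :
    FS2.mul f (c • FS2.mono a b) k l = if a ≤ k ∧ b ≤ l then c * f (k - a) (l - b) else 0 := by
  unfold FS2.mul FS2.mono
  split_ifs with h
  · rw [Finset.sum_eq_single (k - a)]
    · rw [Finset.sum_eq_single (l - b)]
      · have h1 : k - (k - a) = a := by omega
        have h2 : l - (l - b) = b := by omega
        simp [h1, h2, mul_comm]
      · intro q hq hne
        have : ¬ (l - q = b) := by
          have := Finset.mem_range.1 hq
          omega
        simp [this]
      · intro hq
        exact absurd (Finset.mem_range.2 (by omega)) hq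
    · intro r hr hne
      have : ¬ (k - r = a) := by
        have := Finset.mem_range.1 hr
        omega
      simp [this]
    · intro hq
      exact absurd (Finset.mem_range.2 (by omega)) hq
  · refine Finset.sum_eq_zero fun r hr => Finset.sum_eq_zero fun q hq => ?_
    have : ¬ (k - r = a ∧ l - q = b) := by omega
    simp [this]

lemma mul_add (f g h : FS2) : FS2.mul f (g + h) = FS2.mul f g + FS2.mul f h := by
  funext k l
  simp [FS2.mul, _root_.mul_add, Finset.sum_add_distrib]

lemma dz_h2 (n : ℕ) (hn : 5 ≤ n) (a0 b0 : ℝ) :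
    FS2.dz (h2lead n a0 b0) =
      ((n * b0 : ℂ)) • FS2.mono (n - 1) 0 + (2 * a0 : ℂ) • FS2.mono 1 2 := by
  funext k l
  simp only [FS2.dz, h2lead, FS2.mono, Pi.add_apply, Pi.smul_apply, smul_eq_mul]
  by_cases h1 : k + 1 = n ∧ l = 0
  · obtain ⟨rfl, rfl⟩ := h1
    simp
  · have h1' : ¬ (k = n - 1 ∧ l = 0) := by omega
    by_cases h2 : k = 1 ∧ l = 2
    · obtain ⟨rfl, rfl⟩ := h2
      simp
      norm_num
    · have h2' : ¬ (k + 1 = 2 ∧ l = 2) := by omega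
      simp only [if_neg h1, if_neg h1', if_neg h2, if_neg h2']
      simp

lemma dw_h2 (n : ℕ) (hn : 5 ≤ n) (a0 b0 : ℝ) :
    FS2.dw (h2lead n a0 b0) =
      ((n * b0 : ℂ)) • FS2.mono 0 (n - 1) + (2 * a0 : ℂ) • FS2.mono 2 1 := by
  funext k l
  simp only [FS2.dw, h2lead, FS2.mono, Pi.add_apply, Pi.smul_apply, smul_eq_mul]
  have h0 : ¬ (k = n ∧ l + 1 = 0) := by omega
  by_cases h1 : k = 0 ∧ l + 1 = n
  · obtain ⟨rfl, rfl⟩ := h1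
    simp
  · have h1' : ¬ (k = 0 ∧ l = n - 1) := by omega
    by_cases h2 : k = 2 ∧ l = 1
    · obtain ⟨rfl, rfl⟩ := h2
      simp
      norm_num
    · have h2' : ¬ (k = 2 ∧ l + 1 = 2) := by omega
      simp only [if_neg h0, if_neg h1, if_neg h1', if_neg h2, if_neg h2']
      simp

lemma pb_h2 (n : ℕ) (hn : 5 ≤ n) (a0 b0 : ℝ) (χ : FS2) (k l : ℕ) :
    FS2.pb χ (h2lead n a0 b0) k l =
      (if 1 ≤ k ∧ 1 ≤ l then 2 * a0 * ((k : ℂ) - l) * χ (k - 1) (l - 1) else 0)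
      + (if n ≤ l + 1 then n * b0 * ((k : ℂ) + 1) * χ (k + 1) (l + 1 - n) else 0)
      - (if n ≤ k + 1 then n * b0 * ((l : ℂ) + 1) * χ (k + 1 - n) (l + 1) else 0) := by
  unfold FS2.pb
  rw [dz_h2 n hn, dw_h2 n hn, mul_add, mul_add]
  simp only [Pi.sub_apply, Pi.add_apply, mul_smul_mono, FS2.dz, FS2.dw]
  have e1 : (n - 1 ≤ l) ↔ n ≤ l + 1 := by omega
  have e2 : (n - 1 ≤ k) ↔ n ≤ k + 1 := by omega
  have e3 : l - (n - 1) = l + 1 - n := by omega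
  have e4 : k - (n - 1) = k + 1 - n := by omega
  simp only [Nat.zero_le, true_and, and_true, e1, e2, e3, e4, Nat.sub_zero]
  -- The two contributions of `z² z̄²` differ at the boundary `k = 1` or `l = 1`,
  -- where one of them is missing and the formal coefficient is `0`.
  have key : (if 2 ≤ k ∧ 1 ≤ l then
        2 * (a0 : ℂ) * ((((k - 2 : ℕ) : ℂ) + 1) * χ (k - 2 + 1) (l - 1)) else 0)
      - (if 1 ≤ k ∧ 2 ≤ l then
        2 * (a0 : ℂ) * ((((l - 2 : ℕ) : ℂ) + 1) * χ (k - 1) (l - 2 + 1)) else 0)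
      = if 1 ≤ k ∧ 1 ≤ l then 2 * a0 * ((k : ℂ) - l) * χ (k - 1) (l - 1) else 0 := by
    rcases k with _ | _ | k <;> rcases l with _ | _ | l <;> simp <;> ring
  rw [← key]
  have c1 : (if n ≤ l + 1 then (n : ℂ) * b0 * ((k + 1) * χ (k + 1) (l + 1 - n)) else 0)
      = if n ≤ l + 1 then n * b0 * ((k : ℂ) + 1) * χ (k + 1) (l + 1 - n) else 0 := by
    split_ifs <;> ring
  have c2 : (if n ≤ k + 1 then (n : ℂ) * b0 * ((l + 1) * χ (k + 1 - n) (l + 1)) else 0)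
      = if n ≤ k + 1 then n * b0 * ((l : ℂ) + 1) * χ (k + 1 - n) (l + 1) else 0 := by
    split_ifs <;> ring
  rw [c1, c2]
  ring

/-! ### Resonant monomials and the spaces `H^n_m` -/

lemma isResMono_swap {n : ℕ} {m : ℚ} {k l : ℕ} (h : IsResMono n m k l) : IsResMono n m l k := by
  refine ⟨h.1.symm, ?_⟩
  rw [← h.2]
  unfold deltaOrd
  rw [abs_sub_comm, add_comm (l : ℚ)]

lemma deltaOrd_eq (n : ℕ) (hn : 5 ≤ n) (l j : ℕ) :
    deltaOrd n (l + j * n) l = ((l + 2 * j : ℕ) : ℚ) := by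
  unfold deltaOrd
  have h0 : (n : ℚ) ≠ 0 := by
    have : n ≠ 0 := by omega
    exact_mod_cast this
  have h1 : ((l + j * n : ℕ) : ℚ) - l = j * n := by push_cast; ring
  rw [h1, abs_of_nonneg (by positivity)]
  push_cast
  field_simp
  ring

lemma isResMono_add (n : ℕ) (hn : 5 ≤ n) (m l j : ℕ) :
    IsResMono n (m : ℚ) (l + j * n) l ↔ l + 2 * j = m := by
  unfold IsResMono
  rw [deltaOrd_eq n hn, Nat.cast_inj (R := ℚ)]
  simp

lemma isResMono_iff (n : ℕ) (hn : 5 ≤ n) (m k l : ℕ) (hkl : l ≤ k) :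
    IsResMono n (m : ℚ) k l ↔ ∃ j, k = l + j * n ∧ l + 2 * j = m := by
  constructor
  · intro h
    have h1 := (ZMod.natCast_eq_natCast_iff _ _ _).1 h.1.symm
    obtain ⟨j, hj⟩ := (Nat.modEq_iff_dvd' hkl).1 h1
    have hk : k = l + j * n := by rw [mul_comm j n]; omega
    subst hk
    exact ⟨j, rfl, (isResMono_add n hn m l j).1 h⟩
  · rintro ⟨j, rfl, hj⟩
    exact (isResMono_add n hn m l j).2 hj

/-- An element of `H^n_m` is determined by its coefficients at `Q_{m,j}`, `j ≥ 0`. -/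
lemma ext_of_coeffs (n : ℕ) (hn : 5 ≤ n) (m : ℕ) {f g : FS2} (hf : f ∈ Hspace n (m : ℚ))
    (hg : g ∈ Hspace n (m : ℚ))
    (h : ∀ l j, l + 2 * j = m → f (l + j * n) l = g (l + j * n) l) : f = g := by
  have key : ∀ k l, l ≤ k → f k l = g k l := by
    intro k l hkl
    by_cases hr : IsResMono n (m : ℚ) k l
    · obtain ⟨j, rfl, hj⟩ := (isResMono_iff n hn m k l hkl).1 hr
      exact h l j hj
    · rw [not_imp_comm.1 (hf.2 k l) hr, not_imp_comm.1 (hg.2 k l) hr]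
  funext k l
  rcases le_total l k with hkl | hkl
  · exact key k l hkl
  · rw [hf.1 k l, hg.1 k l, key l k hkl]

/-- The element of `H^n_m` with coefficient `C j` at `Q_{m,j}` and `conj (C j)` at `Q_{m,-j}`,
for `j ≥ 0`. The index `j` is recovered from `z^k z̄^l` as `|k - l| / n`, one of the two
truncated differences being `0`. -/
def ofCoeffs (n m : ℕ) (C : ℕ → ℂ) : FS2 := fun k l =>
  open Classical in
  if IsResMono n (m : ℚ) k l then
    (if l ≤ k then C ((k - l) / n) else (starRingEnd ℂ) (C ((l - k) / n)))
  else 0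

lemma ofCoeffs_mem (n m : ℕ) (C : ℕ → ℂ) (hC : (starRingEnd ℂ) (C 0) = C 0) :
    ofCoeffs n m C ∈ Hspace n (m : ℚ) := by
  refine ⟨fun k l => ?_, fun k l h => ?_⟩
  · unfold ofCoeffs
    by_cases hr : IsResMono n (m : ℚ) k l
    · rw [if_pos hr, if_pos (isResMono_swap hr)]
      rcases lt_trichotomy k l with h | rfl | h
      · rw [if_neg (by omega), if_pos (by omega)]
      · simp [hC]
      · rw [if_pos (by omega), if_neg (by omega)]
        simp
    · rw [if_neg hr, if_neg (fun h => hr (isResMono_swap h))]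
      simp
  · by_contra hr
    exact h (by unfold ofCoeffs; rw [if_neg hr])

lemma ofCoeffs_apply (n : ℕ) (hn : 5 ≤ n) (m : ℕ) (C : ℕ → ℂ) (l j : ℕ) (h : l + 2 * j = m) :
    ofCoeffs n m C (l + j * n) l = C j := by
  unfold ofCoeffs
  rw [if_pos ((isResMono_add n hn m l j).2 h), if_pos (by omega)]
  congr 1
  rw [Nat.add_sub_cancel_left]
  exact Nat.mul_div_cancel _ (by omega)

lemma mono_mem (n : ℕ) (hn : 5 ≤ n) (m : ℕ) : FS2.mono m m ∈ Hspace n (m : ℚ) := by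
  refine ⟨fun k l => ?_, fun k l h => ?_⟩
  · simp only [FS2.mono, and_comm (a := l = m)]
    split_ifs <;> simp
  · unfold FS2.mono at h
    have h' : k = m ∧ l = m := by
      by_contra hc
      exact h (if_neg hc)
    rw [h'.1, h'.2]
    simpa using (isResMono_add n hn m m 0).2 rfl

/-! ### The homological operator in coefficients -/

lemma homOp_add (n : ℕ) (hn : 5 ≤ n) (a0 b0 : ℝ) (p : ℕ) (χ χ' : FS2) :
    homOp n a0 b0 p (χ + χ') = homOp n a0 b0 p χ + homOp n a0 b0 p χ' := by
  funext k l
  simp only [homOp, projRes, Pi.add_apply, Pi.smul_apply, smul_eq_mul, pb_h2 n hn]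
  split_ifs <;> ring

lemma homOp_smul (n : ℕ) (hn : 5 ≤ n) (a0 b0 : ℝ) (p : ℕ) (r : ℝ) (χ : FS2) :
    homOp n a0 b0 p (r • χ) = r • homOp n a0 b0 p χ := by
  funext k l
  simp only [homOp, projRes, Pi.smul_apply, smul_eq_mul, pb_h2 n hn, Complex.real_smul]
  split_ifs <;> ring

lemma homOp_apply (n : ℕ) (hn : 5 ≤ n) (a0 b0 : ℝ) (p : ℕ) (χ : FS2) (k l : ℕ)
    (h : IsResMono n ((p + 1 : ℕ) : ℚ) k l) :
    homOp n a0 b0 p χ k l = 2 * Complex.I *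
      ((if 1 ≤ k ∧ 1 ≤ l then 2 * a0 * ((k : ℂ) - l) * χ (k - 1) (l - 1) else 0)
      + (if n ≤ l + 1 then n * b0 * ((k : ℂ) + 1) * χ (k + 1) (l + 1 - n) else 0)
      - (if n ≤ k + 1 then n * b0 * ((l : ℂ) + 1) * χ (k + 1 - n) (l + 1) else 0)) := by
  push_cast at h
  rw [← pb_h2 n hn]
  simp only [homOp, projRes, Pi.smul_apply, smul_eq_mul]
  exact if_pos h

lemma homOp_mem (n : ℕ) (hn : 5 ≤ n) (a0 b0 : ℝ) (p : ℕ) (χ : FS2) (hχ : FS2.IsReal χ) :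
    homOp n a0 b0 p χ ∈ Hspace n ((p + 1 : ℕ) : ℚ) := by
  have hsupp : ∀ k l, ¬ IsResMono n ((p + 1 : ℕ) : ℚ) k l → homOp n a0 b0 p χ k l = 0 := by
    intro k l hr
    push_cast at hr
    exact if_neg hr
  refine ⟨fun k l => ?_, fun k l => not_imp_comm.1 (hsupp k l)⟩
  by_cases hr : IsResMono n ((p + 1 : ℕ) : ℚ) k l
  · rw [homOp_apply n hn a0 b0 p χ k l hr, homOp_apply n hn a0 b0 p χ l k (isResMono_swap hr),
      hχ (k - 1), hχ (k + 1), hχ (k + 1 - n)]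
    simp only [and_comm (a := 1 ≤ l), map_mul, map_add, map_sub, apply_ite (starRingEnd ℂ), Complex.conj_I,
      Complex.conj_ofReal, map_natCast, map_ofNat, map_zero, map_one]
    split_ifs <;> ring
  · rw [hsupp k l hr, hsupp l k (fun h => hr (isResMono_swap h))]
    simp

/-- An inward move by one `n`-step lands in the δ-order of `H^n_p` only if `n = 4`, so it does not
contribute to `L_p` on or above the diagonal. -/
lemma inward_zero (n : ℕ) (hn : 5 ≤ n) (p : ℕ) {χ : FS2} (hχ : χ ∈ Hspace n (p : ℚ))
    (l j : ℕ) (h : l + 2 * j = p + 1) (hl : n ≤ l + 1) :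
    χ (l + j * n + 1) (l + 1 - n) = 0 := by
  by_contra hne
  have hr := hχ.2 _ _ hne
  have e : l + j * n + 1 = (l + 1 - n) + (j + 1) * n := by
    have : (j + 1) * n = j * n + n := by ring
    omega
  rw [e] at hr
  have := (isResMono_add n hn p _ _).1 hr
  omega

lemma homOp_diag (n : ℕ) (hn : 5 ≤ n) (a0 b0 : ℝ) (p : ℕ) {χ : FS2}
    (hχ : χ ∈ Hspace n (p : ℚ)) : homOp n a0 b0 p χ (p + 1) (p + 1) = 0 := by
  have hr : IsResMono n ((p + 1 : ℕ) : ℚ) (p + 1) (p + 1) := by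
    simpa using (isResMono_add n hn (p + 1) (p + 1) 0).2 rfl
  rw [homOp_apply n hn a0 b0 p χ _ _ hr]
  by_cases hl : n ≤ p + 1 + 1
  · have h1 : χ (p + 1 + 1) (p + 1 + 1 - n) = 0 := by
      simpa using inward_zero n hn p hχ (p + 1) 0 rfl hl
    have h2 : χ (p + 1 + 1 - n) (p + 1 + 1) = 0 := by
      rw [hχ.1, h1, map_zero]
    simp [h1, h2]
  · simp [hl]

/-- The coefficient of `L_p χ` at `Q_{p+1,j+1}`, where `s = p - 2 (j + 1)`. -/
lemma homOp_coeff (n : ℕ) (hn : 5 ≤ n) (a0 b0 : ℝ) (p : ℕ) {χ : FS2}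
    (hχ : χ ∈ Hspace n (p : ℚ)) (s j : ℕ) (h : s + 2 * (j + 1) = p) :
    homOp n a0 b0 p χ (s + 1 + (j + 1) * n) (s + 1) =
      2 * Complex.I * n * (2 * a0 * (j + 1) * χ (s + (j + 1) * n) s
        - b0 * (s + 2) * χ (s + 2 + j * n) (s + 2)) := by
  have hr : IsResMono n ((p + 1 : ℕ) : ℚ) (s + 1 + (j + 1) * n) (s + 1) :=
    (isResMono_add n hn _ _ _).2 (by omega)
  rw [homOp_apply n hn a0 b0 p χ _ _ hr]
  have hz : (if n ≤ s + 1 + 1 then (n : ℂ) * b0 * (((s + 1 + (j + 1) * n : ℕ) : ℂ) + 1) *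
      χ (s + 1 + (j + 1) * n + 1) (s + 1 + 1 - n) else 0) = 0 := by
    split_ifs with hl
    · rw [inward_zero n hn p hχ (s + 1) (j + 1) (by omega) hl, mul_zero]
    · rfl
  have e0 : (j + 1) * n = j * n + n := by ring
  have e1 : s + 1 + (j + 1) * n - 1 = s + (j + 1) * n := by omega
  have e2 : s + 1 + (j + 1) * n + 1 - n = s + 2 + j * n := by omega
  rw [hz, if_pos (by omega), if_pos (by omega), e1, e2, Nat.add_sub_cancel]
  push_cast
  ring

/-! ### Kernel and image -/

/-- For `a₀ ≠ 0`, the solution of `2 a₀ (j+1) C (j+1) - b₀ (p - 2j) C j = D j` with `C 0 = c`. -/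
def sol (a0 b0 : ℝ) (p : ℕ) (c : ℂ) (D : ℕ → ℂ) : ℕ → ℂ
  | 0 => c
  | j + 1 => (D j + b0 * ((p : ℂ) - 2 * j) * sol a0 b0 p c D j) / (2 * a0 * (j + 1))

lemma homOp_ofCoeffs_sol (n : ℕ) (hn : 5 ≤ n) (a0 b0 : ℝ) (ha : a0 ≠ 0) (p : ℕ) (c : ℂ)
    (hc : (starRingEnd ℂ) c = c) (D : ℕ → ℂ) (s j : ℕ) (h : s + 2 * (j + 1) = p) :
    homOp n a0 b0 p (ofCoeffs n p (sol a0 b0 p c D)) (s + 1 + (j + 1) * n) (s + 1) =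
      2 * Complex.I * n * D j := by
  rw [homOp_coeff n hn a0 b0 p (ofCoeffs_mem n p _ hc) s j h,
    ofCoeffs_apply n hn p _ s (j + 1) h, ofCoeffs_apply n hn p _ (s + 2) j (by omega)]
  have ha' : (a0 : ℂ) ≠ 0 := by exact_mod_cast ha
  have hj : ((j : ℂ) + 1) ≠ 0 := by exact_mod_cast Nat.succ_ne_zero j
  have hs : (s : ℂ) + 2 = (p : ℂ) - 2 * j := by
    rw [← h]
    push_cast
    ring
  rw [hs, sol]
  field_simp
  ring

lemma eq_zero_of_homOp (n : ℕ) (hn : 5 ≤ n) (a0 b0 : ℝ) (ha : a0 ≠ 0) (p : ℕ) {χ : FS2}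
    (hχ : χ ∈ Hspace n (p : ℚ)) (h0 : homOp n a0 b0 p χ = 0) (hd : χ p p = 0) : χ = 0 := by
  refine ext_of_coeffs n hn p hχ (Hspace n (p : ℚ)).zero_mem fun l j => ?_
  show l + 2 * j = p → χ (l + j * n) l = 0
  induction j generalizing l with
  | zero =>
    intro h
    obtain rfl : l = p := by omega
    simpa using hd
  | succ j ih =>
    intro h
    have hc := homOp_coeff n hn a0 b0 p hχ l j h
    rw [h0, ih (l + 2) (by omega)] at hc
    have ha' : (a0 : ℂ) ≠ 0 := by exact_mod_cast ha
    have hj : ((j : ℂ) + 1) ≠ 0 := by exact_mod_cast Nat.succ_ne_zero j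
    have hn' : (n : ℂ) ≠ 0 := by
      have : n ≠ 0 := by omega
      exact_mod_cast this
    simpa [ha', hj, hn', Complex.I_ne_zero] using hc.symm

end HomOp

open HomOp

/-- **The homological operator at even δ-order (n ≥ 5).**
For even `p ≥ 2`, `L_p : H^n_p → H^n_{p+1}` is a well-defined real-linear map with a
one-dimensional kernel, and its image has a one-dimensional complement:
`H^n_{p+1} = L_p(H^n_p) ⊕ ℝ·Q_{p+1,0}`. -/
theorem homological_operator_even
    (n : ℕ) (hn : 5 ≤ n) (a0 b0 : ℝ) (ha : a0 ≠ 0) (hb : b0 ≠ 0)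
    (p : ℕ) (hp : 2 ≤ p) (heven : Even p) :
    (∀ χ ∈ Hspace n (p : ℚ), homOp n a0 b0 p χ ∈ Hspace n ((p : ℚ) + 1)) ∧
    (∀ χ χ' : FS2, homOp n a0 b0 p (χ + χ') = homOp n a0 b0 p χ + homOp n a0 b0 p χ') ∧
    (∀ (r : ℝ) (χ : FS2), homOp n a0 b0 p (r • χ) = r • homOp n a0 b0 p χ) ∧
    (∃ κ, κ ∈ Hspace n (p : ℚ) ∧ κ ≠ 0 ∧ homOp n a0 b0 p κ = 0 ∧
      ∀ χ ∈ Hspace n (p : ℚ), homOp n a0 b0 p χ = 0 → ∃ c : ℝ, χ = c • κ) ∧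
    (∀ g ∈ Hspace n ((p : ℚ) + 1),
      (∃ χ ∈ Hspace n (p : ℚ), ∃ c : ℝ,
        g = homOp n a0 b0 p χ + c • FS2.mono (p + 1) (p + 1)) ∧
      (∀ χ ∈ Hspace n (p : ℚ), ∀ χ' ∈ Hspace n (p : ℚ), ∀ c c' : ℝ,
        g = homOp n a0 b0 p χ + c • FS2.mono (p + 1) (p + 1) →
        g = homOp n a0 b0 p χ' + c' • FS2.mono (p + 1) (p + 1) → c = c')) := by
  have hcast : ((p : ℚ) + 1) = ((p + 1 : ℕ) : ℚ) := by push_cast; rfl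
  have hn' : (n : ℂ) ≠ 0 := by
    have : n ≠ 0 := by omega
    exact_mod_cast this
  have hre : ∀ (m : ℕ) (f : FS2), f ∈ Hspace n (m : ℚ) → ((f m m).re : ℂ) = f m m :=
    fun m f hf => Complex.conj_eq_iff_re.1 (hf.1 m m).symm
  have hdiag : ∀ C : ℕ → ℂ, ofCoeffs n p C p p = C 0 := fun C => by
    simpa using ofCoeffs_apply n hn p C p 0 (by omega)
  refine ⟨fun χ hχ => ?_, homOp_add n hn a0 b0 p, homOp_smul n hn a0 b0 p, ?_, fun g hg => ⟨?_, ?_⟩⟩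
  · rw [hcast]
    exact homOp_mem n hn a0 b0 p χ hχ.1
  · have hκ := ofCoeffs_mem n p (sol a0 b0 p 1 0) (map_one _)
    have hκ0 : homOp n a0 b0 p (ofCoeffs n p (sol a0 b0 p 1 0)) = 0 := by
      refine ext_of_coeffs n hn (p + 1) (homOp_mem n hn a0 b0 p _ hκ.1)
        (Hspace n ((p + 1 : ℕ) : ℚ)).zero_mem fun l j h => ?_
      rcases j with _ | j
      · obtain rfl : l = p + 1 := by omega
        simpa using homOp_diag n hn a0 b0 p hκ
      · -- `l` is odd because `p` is even, so `l ≥ 1`.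
        obtain ⟨s, rfl⟩ : ∃ s, l = s + 1 := ⟨l - 1, by obtain ⟨q, rfl⟩ := heven; omega⟩
        simpa using homOp_ofCoeffs_sol n hn a0 b0 ha p 1 (map_one _) 0 s j (by omega)
    refine ⟨_, hκ, fun h => ?_, hκ0, fun χ hχ h0 => ⟨(χ p p).re, ?_⟩⟩
    · have := hdiag (sol a0 b0 p 1 0)
      rw [h] at this
      simp [sol] at this
    · have hs : χ + (-(χ p p).re) • ofCoeffs n p (sol a0 b0 p 1 0) = 0 := by
        refine eq_zero_of_homOp n hn a0 b0 ha p
          (Submodule.add_mem _ hχ (Submodule.smul_mem _ _ hκ)) ?_ ?_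
        · rw [homOp_add n hn, homOp_smul n hn, h0, hκ0, smul_zero, add_zero]
        · simp only [Pi.add_apply, Pi.smul_apply, hdiag, sol, Complex.real_smul, mul_one]
          rw [Complex.ofReal_neg, hre p χ hχ, add_neg_cancel]
      rw [neg_smul] at hs
      exact add_neg_eq_zero.1 hs
  · rw [hcast] at hg
    -- The `D j` of the recursion: the coefficient of `g` at `Q_{p+1,j+1}` divided by `2 i n`.
    let D : ℕ → ℂ := fun j =>
      g (p - 2 * (j + 1) + 1 + (j + 1) * n) (p - 2 * (j + 1) + 1) / (2 * Complex.I * n)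
    have hχ := ofCoeffs_mem n p (sol a0 b0 p 0 D) (map_zero _)
    refine ⟨_, hχ, (g (p + 1) (p + 1)).re, ?_⟩
    refine ext_of_coeffs n hn (p + 1) hg (Submodule.add_mem _ (homOp_mem n hn a0 b0 p _ hχ.1)
      (Submodule.smul_mem _ _ (mono_mem n hn (p + 1)))) fun l j h => ?_
    rcases j with _ | j
    · obtain rfl : l = p + 1 := by omega
      simp [homOp_diag n hn a0 b0 p hχ, FS2.mono, hre (p + 1) g hg]
    · obtain ⟨s, rfl⟩ : ∃ s, l = s + 1 := ⟨l - 1, by obtain ⟨q, rfl⟩ := heven; omega⟩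
      have hs : p - 2 * (j + 1) = s := by omega
      have hm : FS2.mono (p + 1) (p + 1) (s + 1 + (j + 1) * n) (s + 1) = 0 :=
        if_neg (by omega)
      simp only [Pi.add_apply, Pi.smul_apply, hm, smul_zero, add_zero]
      rw [homOp_ofCoeffs_sol n hn a0 b0 ha p 0 (map_zero _) D s j (by omega)]
      simp only [D, hs]
      have hI := Complex.I_ne_zero
      field_simp
  · intro χ hχ χ' hχ' c c' h h'
    have := congrFun (congrFun (h.symm.trans h') (p + 1)) (p + 1)
    simpa [homOp_diag n hn a0 b0 p hχ, homOp_diag n hn a0 b0 p hχ', FS2.mono] using this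

end
end
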